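/- arXiv:1212.2080 — 2 statements merged into one kernel-verified Lean document; each statement's English description precedes it below -/
import Mathlib

section
/- Let M be a tropical oriented matroid with parameters (n,d). Define the dual collection M† of (d,n)-types as follows: for a vertex A of M (a type of dimension 0), its dual type A† is the (d,n)-type with (A†)_j = {i ∈ [n] : j ∈ A_i} for j ∈ [d], and M† = { (A†)|_P : A a vertex of M, P an ordered partition of [n] }, where (A†)|_P denotes the refinement of A† with respect to P (with the roles of n and d interchanged). Then M† is a tropical oriented matroid with parameters (d,n). -/
/-- A step from `j` to `k` along an edge of the comparability graph `Γ(A,B)`,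
traversed in an allowed direction: there is `i` with `j ∈ A i`, `k ∈ B i`, `j ≠ k`
(such an edge is undirected precisely when moreover `j ∈ B i` and `k ∈ A i`, and then
the reversed step is also of this form). -/
def CompStep {n d : ℕ} (A B : Fin n → Finset (Fin d)) (j k : Fin d) : Prop :=
  ∃ i, j ∈ A i ∧ k ∈ B i ∧ j ≠ k

/-- A traversal of a *directed* edge of `Γ(A,B)` in its given direction. -/
def CompDirStep {n d : ℕ} (A B : Fin n → Finset (Fin d)) (j k : Fin d) : Prop :=
  ∃ i, j ∈ A i ∧ k ∈ B i ∧ j ≠ k ∧ ¬ (j ∈ B i ∧ k ∈ A i)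

/-- The comparability graph `Γ(A,B)` is acyclic: there is no closed walk consisting
of legally traversed edges at least one of which is directed. -/
def CompAcyclic {n d : ℕ} (A B : Fin n → Finset (Fin d)) : Prop :=
  ¬ ∃ j k : Fin d, CompDirStep A B j k ∧ Relation.ReflTransGen (CompStep A B) k j

/-- An ordered partition of the ground set: a list of nonempty, pairwise disjoint
sets covering everything. -/
def IsOrderedPartition {α : Type*} [Fintype α] [DecidableEq α]
    (P : List (Finset α)) : Prop :=
  (∀ p ∈ P, p.Nonempty) ∧ P.Pairwise Disjoint ∧ P.foldr (· ∪ ·) ∅ = Finset.univ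

/-- `refineEntry s P = s ∩ P_{m}` where `m` is the first index with `s ∩ P_m ≠ ∅`. -/
def refineEntry {α : Type*} [DecidableEq α] (s : Finset α) :
    List (Finset α) → Finset α
  | [] => ∅
  | p :: rest => if (s ∩ p).Nonempty then s ∩ p else refineEntry s rest

/-- The refinement `A|_P` of a type `A` with respect to an ordered partition `P`. -/
def refineType {n d : ℕ} (A : Fin n → Finset (Fin d)) (P : List (Finset (Fin d))) :
    Fin n → Finset (Fin d) :=
  fun i => refineEntry (A i) P

/-- `M` is a tropical oriented matroid with parameters `(n,d)`. -/
def IsTOM (n d : ℕ) (M : Set (Fin n → Finset (Fin d))) : Prop :=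
  (∀ A ∈ M, ∀ i, (A i).Nonempty) ∧
  (∀ j : Fin d, (fun _ : Fin n => ({j} : Finset (Fin d))) ∈ M) ∧
  (∀ A ∈ M, ∀ B ∈ M, CompAcyclic A B) ∧
  (∀ A ∈ M, ∀ B ∈ M, ∀ j : Fin n, ∃ C ∈ M, C j = A j ∪ B j ∧
      ∀ k, C k = A k ∨ C k = B k ∨ C k = A k ∪ B k) ∧
  (∀ A ∈ M, ∀ P : List (Finset (Fin d)), IsOrderedPartition P → refineType A P ∈ M)

/-- The type graph `K_A`: the bipartite graph on `N_1,…,N_n,D_1,…,D_d` with an edge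
`{N_i, D_j}` whenever `j ∈ A_i`. -/
def typeGraph {n d : ℕ} (A : Fin n → Finset (Fin d)) : SimpleGraph (Fin n ⊕ Fin d) :=
  SimpleGraph.fromRel (fun x y =>
    match x, y with
    | Sum.inl i, Sum.inr j => j ∈ A i
    | _, _ => False)

/-- The dimension of a type: the number of connected components of `K_A` minus 1
(as an integer). -/
noncomputable def typeDim {n d : ℕ} (A : Fin n → Finset (Fin d)) : ℤ :=
  (Nat.card (typeGraph A).ConnectedComponent : ℤ) - 1

/-- A tropical oriented matroid is in general position if all its type graphs are
acyclic. -/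
def InGeneralPosition {n d : ℕ} (M : Set (Fin n → Finset (Fin d))) : Prop :=
  ∀ A ∈ M, (typeGraph A).IsAcyclic

/-- Two types are incident if one is an entrywise subset of the other. -/
def Incident {n d : ℕ} (X Y : Fin n → Finset (Fin d)) : Prop :=
  (∀ i, X i ⊆ Y i) ∨ (∀ i, Y i ⊆ X i)

/-- The combinatorial convex hull `M_{AB}` of two types within a collection `M`. -/
def Hull {n d : ℕ} (M : Set (Fin n → Finset (Fin d)))
    (A B : Fin n → Finset (Fin d)) : Set (Fin n → Finset (Fin d)) :=
  {C | C ∈ M ∧ ∀ i, C i = A i ∨ C i = B i ∨ C i = A i ∪ B i}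

/-- `X` and `Y` are joined by a finite sequence of types in `S` in which consecutive
types are incident. -/
def ConnectedIn {n d : ℕ} (S : Set (Fin n → Finset (Fin d)))
    (X Y : Fin n → Finset (Fin d)) : Prop :=
  Relation.ReflTransGen (fun U V => U ∈ S ∧ V ∈ S ∧ Incident U V) X Y

/-- The dual `(d,n)`-type of an `(n,d)`-type: `(A†)_j = {i : j ∈ A_i}`. -/
def dualType {n d : ℕ} (A : Fin n → Finset (Fin d)) : Fin d → Finset (Fin n) :=
  fun j => Finset.univ.filter (fun i => j ∈ A i)


namespace TOMD
noncomputable section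
open scoped Classical

abbrev Ch (X : Type*) := Finset X →₀ ZMod 2

def bd {X : Type*} : Ch X →ₗ[ZMod 2] Ch X :=
  Finsupp.linearCombination (ZMod 2) (fun σ => ∑ x ∈ σ, Finsupp.single (σ.erase x) (1 : ZMod 2))

def cone {X : Type*} (p : X) : Ch X →ₗ[ZMod 2] Ch X :=
  Finsupp.linearCombination (ZMod 2)
    (fun σ => if p ∈ σ then 0 else Finsupp.single (insert p σ) (1 : ZMod 2))

lemma bd_single {X : Type*} (σ : Finset X) :
    bd (Finsupp.single σ (1 : ZMod 2)) = ∑ x ∈ σ, Finsupp.single (σ.erase x) (1 : ZMod 2) := by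
  simp [bd]

lemma cone_single {X : Type*} (p : X) (σ : Finset X) :
    cone p (Finsupp.single σ (1 : ZMod 2))
      = if p ∈ σ then 0 else Finsupp.single (insert p σ) (1 : ZMod 2) := by
  simp [cone]

lemma ch_add_self {X : Type*} (z : Ch X) : z + z = 0 := by
  ext σ; simpa using CharTwo.add_self_eq_zero (z σ)

lemma bd_cone {X : Type*} (p : X) (z : Ch X) : bd (cone p z) = z + cone p (bd z) := by
  have : (bd ∘ₗ cone p : Ch X →ₗ[ZMod 2] Ch X) = LinearMap.id + cone p ∘ₗ bd := by
    apply Finsupp.lhom_ext'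
    intro σ
    apply LinearMap.ext_ring
    simp only [LinearMap.comp_apply, LinearMap.add_apply, LinearMap.id_apply,
      Finsupp.lsingle_apply]
    rw [cone_single, bd_single, map_sum]
    by_cases hp : p ∈ σ
    · rw [if_pos hp, map_zero]
      rw [Finset.sum_eq_single p]
      · rw [cone_single, if_neg (by simp), Finset.insert_erase hp, ch_add_self]
      · intro y hy hyp
        rw [cone_single, if_pos]
        exact Finset.mem_erase.2 ⟨hyp.symm, hp⟩
      · intro h; exact absurd hp h
    · rw [if_neg hp, bd_single, Finset.sum_insert hp, Finset.erase_insert hp]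
      congr 1
      apply Finset.sum_congr rfl
      intro y hy
      have : y ≠ p := fun h => hp (h ▸ hy)
      rw [cone_single, if_neg (by simp [hp]), Finset.erase_insert_of_ne this.symm]
  exact LinearMap.congr_fun this z

lemma cone_cone {X : Type*} (p : X) (z : Ch X) : cone p (cone p z) = 0 := by
  have : (cone p ∘ₗ cone p : Ch X →ₗ[ZMod 2] Ch X) = 0 := by
    apply Finsupp.lhom_ext'
    intro σ
    apply LinearMap.ext_ring
    simp only [LinearMap.comp_apply, Finsupp.lsingle_apply]
    rw [cone_single]
    by_cases hp : p ∈ σ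
    · simp [hp]
    · rw [if_neg hp, cone_single, if_pos (by simp)]; simp
  exact LinearMap.congr_fun this z

/-- chains supported on simplices satisfying a predicate -/
abbrev Sup {X : Type*} (P : Finset X → Prop) : Submodule (ZMod 2) (Ch X) :=
  Finsupp.supported (ZMod 2) (ZMod 2) {σ | P σ}

lemma sup_single {X : Type*} {P : Finset X → Prop} {σ : Finset X} (h : P σ) :
    Finsupp.single σ (1 : ZMod 2) ∈ Sup P :=
  Finsupp.single_mem_supported _ _ h

lemma sup_lin {X : Type*} {N : Type*} [AddCommGroup N] [Module (ZMod 2) N] {P : Finset X → Prop}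
    (L : Ch X →ₗ[ZMod 2] N) (W : Submodule (ZMod 2) N)
    (h : ∀ σ, P σ → L (Finsupp.single σ 1) ∈ W) {z : Ch X} (hz : z ∈ Sup P) : L z ∈ W := by
  rw [Finsupp.mem_supported] at hz
  rw [← Finsupp.sum_single z, Finsupp.sum, map_sum]
  refine Submodule.sum_mem _ fun σ hσ => ?_
  have : Finsupp.single σ (z σ) = (z σ) • Finsupp.single σ (1 : ZMod 2) := by simp
  rw [this, map_smul]
  exact W.smul_mem _ (h σ (hz hσ))

lemma sup_zero {X : Type*} {N : Type*} [AddCommGroup N] [Module (ZMod 2) N]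
    {P : Finset X → Prop} (L : Ch X →ₗ[ZMod 2] N)
    (h : ∀ σ, P σ → L (Finsupp.single σ 1) = 0) {z : Ch X} (hz : z ∈ Sup P) : L z = 0 := by
  rw [Finsupp.mem_supported] at hz
  rw [← Finsupp.sum_single z, Finsupp.sum, map_sum]
  refine Finset.sum_eq_zero fun σ hσ => ?_
  have : Finsupp.single σ (z σ) = (z σ) • Finsupp.single σ (1 : ZMod 2) := by simp
  rw [this, map_smul, h σ (hz hσ), smul_zero]

lemma sup_mono {X : Type*} {P Q : Finset X → Prop} (h : ∀ σ, P σ → Q σ) {z : Ch X}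
    (hz : z ∈ Sup P) : z ∈ Sup Q :=
  Finsupp.supported_mono (fun σ hσ => h σ hσ) hz

lemma sup_cone {X : Type*} {P Q : Finset X → Prop} {p : X} (h : ∀ σ, P σ → Q (insert p σ))
    {z : Ch X} (hz : z ∈ Sup P) : cone p z ∈ Sup Q := by
  refine sup_lin _ _ (fun σ hσ => ?_) hz
  rw [cone_single]
  split_ifs
  · exact Submodule.zero_mem _
  · exact sup_single (h σ hσ)

/-- Sperner functional -/
def rho {X B : Type*} [DecidableEq B] (lam : X → B) (T : Finset B) : Ch X →ₗ[ZMod 2] ZMod 2 :=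
  Finsupp.linearCombination (ZMod 2)
    (fun σ => if σ.image lam = T ∧ σ.card = T.card then (1 : ZMod 2) else 0)

lemma rho_single {X B : Type*} [DecidableEq B] (lam : X → B) (T : Finset B) (σ : Finset X) :
    rho lam T (Finsupp.single σ 1) = if σ.image lam = T ∧ σ.card = T.card then 1 else 0 := by
  simp [rho]

lemma rho_bd_single {X B : Type*} [DecidableEq B] (lam : X → B) (K : Finset B) (v : B) (hv : v ∈ K)
    (σ : Finset X) (hσ : σ.image lam ⊆ K) :
    rho lam K (Finsupp.single σ 1) = rho lam (K.erase v) (bd (Finsupp.single σ 1)) := by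
  rw [bd_single, map_sum, rho_single]
  simp only [rho_single]
  by_cases hc : σ.card = K.card
  swap
  · rw [if_neg (fun h => hc h.2)]
    symm
    apply Finset.sum_eq_zero
    intro x hx
    rw [if_neg]
    rintro ⟨-, h⟩
    rw [Finset.card_erase_of_mem hx, Finset.card_erase_of_mem hv] at h
    have := Finset.card_pos.2 ⟨x, hx⟩
    have := Finset.card_pos.2 ⟨v, hv⟩
    omega
  by_cases hi : σ.image lam = K
  · rw [if_pos ⟨hi, hc⟩]
    have hinj : Set.InjOn lam σ := Finset.card_image_iff.1 (by rw [hi, hc])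
    obtain ⟨x, hx, hxv⟩ := Finset.mem_image.1 (hi ▸ hv)
    rw [Finset.sum_eq_single x]
    · rw [if_pos]
      refine ⟨?_, ?_⟩
      · ext b
        simp only [Finset.mem_image, Finset.mem_erase]
        constructor
        · rintro ⟨y, ⟨hyx, hy⟩, rfl⟩
          refine ⟨fun h => hyx (hinj hy hx (h.trans hxv.symm)), hi ▸ Finset.mem_image_of_mem _ hy⟩
        · rintro ⟨hb, hbK⟩
          obtain ⟨y, hy, rfl⟩ := Finset.mem_image.1 (hi.symm ▸ hbK)
          exact ⟨y, ⟨fun h => hb (h ▸ hxv), hy⟩, rfl⟩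
      · rw [Finset.card_erase_of_mem hx, Finset.card_erase_of_mem hv, hc]
    · intro y hy hyx
      rw [if_neg]
      rintro ⟨h, -⟩
      have : lam x ∈ (σ.erase y).image lam :=
        Finset.mem_image_of_mem _ (Finset.mem_erase.2 ⟨hyx.symm, hx⟩)
      rw [h, hxv] at this
      simp at this
    · intro h; exact absurd hx h
  · rw [if_neg (fun h => hi h.1)]
    symm
    by_cases hex : ∃ x ∈ σ, (σ.erase x).image lam = K.erase v ∧ (σ.erase x).card = (K.erase v).card
    swap
    · apply Finset.sum_eq_zero
      intro x hx
      rw [if_neg]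
      intro h
      exact hex ⟨x, hx, h⟩
    obtain ⟨x, hx, hxi, hxc⟩ := hex
    have hinj : Set.InjOn lam (σ.erase x) := Finset.card_image_iff.1 (by rw [hxi, hxc])
    have hxv : lam x ≠ v := by
      intro h
      apply hi
      apply Finset.Subset.antisymm hσ
      intro b hb
      by_cases hbv : b = v
      · rw [hbv, ← h]; exact Finset.mem_image_of_mem _ hx
      · have : b ∈ (σ.erase x).image lam := hxi ▸ Finset.mem_erase.2 ⟨hbv, hb⟩
        exact Finset.image_subset_image (Finset.erase_subset _ _) this
    have : lam x ∈ (σ.erase x).image lam := by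
      rw [hxi]; exact Finset.mem_erase.2 ⟨hxv, hσ (Finset.mem_image_of_mem _ hx)⟩
    obtain ⟨y, hy, hyx⟩ := Finset.mem_image.1 this
    have hyσ := Finset.mem_of_mem_erase hy
    have hne : x ≠ y := (Finset.ne_of_mem_erase hy).symm
    have hvnot : ∀ z ∈ σ, lam z ≠ v := by
      intro z hz hzv
      by_cases hzx : z = x
      · exact hxv (hzx ▸ hzv)
      · have : lam z ∈ (σ.erase x).image lam :=
          Finset.mem_image_of_mem _ (Finset.mem_erase.2 ⟨hzx, hz⟩)
        rw [hxi, hzv] at this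
        simp at this
    rw [← Finset.sum_subset (s₁ := {x, y})]
    · rw [Finset.sum_pair hne, if_pos ⟨hxi, hxc⟩, if_pos]
      · decide
      · refine ⟨?_, ?_⟩
        · rw [← hxi]
          ext b
          simp only [Finset.mem_image, Finset.mem_erase]
          constructor
          · rintro ⟨z, ⟨hz, hzσ⟩, rfl⟩
            by_cases hzx : z = x
            · exact ⟨y, ⟨hne.symm, hyσ⟩, by rw [hzx, hyx]⟩
            · exact ⟨z, ⟨hzx, hzσ⟩, rfl⟩
          · rintro ⟨z, ⟨hz, hzσ⟩, rfl⟩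
            by_cases hzy : z = y
            · exact ⟨x, ⟨hne, hx⟩, by rw [hzy, hyx]⟩
            · exact ⟨z, ⟨hzy, hzσ⟩, rfl⟩
        · rw [Finset.card_erase_of_mem hyσ, Finset.card_erase_of_mem hv, hc]
    · intro z hz
      simp only [Finset.mem_insert, Finset.mem_singleton] at hz
      rcases hz with rfl | rfl <;> assumption
    · intro z hz hzn
      simp only [Finset.mem_insert, Finset.mem_singleton, not_or] at hzn
      rw [if_neg]
      rintro ⟨h1, h2⟩
      have hinj2 : Set.InjOn lam (σ.erase z) := Finset.card_image_iff.1 (by rw [h1, h2])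
      apply hne
      exact hinj2 (by simp [hx, Ne.symm hzn.1]) (by simp [hyσ, Ne.symm hzn.2]) hyx.symm

lemma sperner {X B : Type*} [DecidableEq B] (lam : X → B) (K0 : Finset B) (Z : Finset B → Ch X)
    (h0 : Z ∅ = Finsupp.single ∅ 1)
    (hbd : ∀ K ⊆ K0, K.Nonempty → bd (Z K) = ∑ k ∈ K, Z (K.erase k))
    (hlab : ∀ K ⊆ K0, Z K ∈ Sup (fun σ => σ.image lam ⊆ K)) :
    rho lam K0 (Z K0) = 1 := by
  suffices H : ∀ m, ∀ K ⊆ K0, K.card = m → rho lam K (Z K) = 1 from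
    H _ K0 (Finset.Subset.refl _) rfl
  intro m
  induction m with
  | zero =>
    intro K hK hc
    rw [Finset.card_eq_zero.1 hc, h0, rho_single]; simp
  | succ m ih =>
    intro K hK hc
    obtain ⟨v, hv⟩ : K.Nonempty := Finset.card_pos.1 (by omega)
    have e1 : rho lam K (Z K) = rho lam (K.erase v) (bd (Z K)) := by
      have := sup_zero (P := fun σ => σ.image lam ⊆ K)
        (rho lam K - rho lam (K.erase v) ∘ₗ bd)
        (fun σ hσ => by
          simp only [LinearMap.sub_apply, LinearMap.comp_apply]
          rw [rho_bd_single lam K v hv σ hσ, sub_self]) (hlab K hK)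
      exact sub_eq_zero.1 this
    rw [e1, hbd K hK ⟨v, hv⟩, map_sum, Finset.sum_eq_single v]
    · exact ih _ ((Finset.erase_subset _ _).trans hK) (by rw [Finset.card_erase_of_mem hv]; omega)
    · intro k hk hkv
      exact sup_zero (P := fun σ => σ.image lam ⊆ K.erase k)
        (rho lam (K.erase v))
        (fun σ hσ => by
          rw [rho_single, if_neg]
          rintro ⟨h, -⟩
          have : k ∈ K.erase v := Finset.mem_erase.2 ⟨hkv, hk⟩
          rw [← h] at this
          simpa using hσ this) (hlab _ ((Finset.erase_subset _ _).trans hK))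
    · intro h; exact absurd hv h

lemma rho_ne {X B : Type*} [DecidableEq B] (lam : X → B) (K : Finset B) (P : Finset X → Prop) (z : Ch X)
    (hz : z ∈ Sup P) (h : rho lam K z = 1) : ∃ σ, P σ ∧ σ.image lam = K := by
  by_contra hcon
  push Not at hcon
  have := sup_zero (P := P) (rho lam K) (fun σ hσ => by
    rw [rho_single, if_neg]
    exact fun h => hcon σ hσ h.1) hz
  rw [h] at this
  exact one_ne_zero this

/-- subdivision -/
def sdA {X Y : Type*} (b : Finset X → Y) : ℕ → Finset X → Ch Y
  | 0, _ => Finsupp.single ∅ 1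
  | m + 1, σ => cone (b σ) (∑ x ∈ σ, sdA b m (σ.erase x))

def sd {X Y : Type*} (b : Finset X → Y) : Ch X →ₗ[ZMod 2] Ch Y :=
  Finsupp.linearCombination (ZMod 2) (fun σ => sdA b σ.card σ)

lemma sd_single {X Y : Type*} (b : Finset X → Y) (σ : Finset X) :
    sd b (Finsupp.single σ 1) = sdA b σ.card σ := by simp [sd]

lemma sum_swap_zero {X Y : Type*} (s : Finset X) (t : X → Finset X)
    (f : X → X → Ch Y) (ht : ∀ x ∈ s, ∀ y ∈ t x, y ∈ s ∧ x ∈ t y ∧ x ≠ y)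
    (hf : ∀ x ∈ s, ∀ y ∈ t x, f x y = f y x) : ∑ x ∈ s, ∑ y ∈ t x, f x y = 0 := by
  rw [Finset.sum_sigma']
  refine Finset.sum_involution (fun p _ => ⟨p.2, p.1⟩) ?_ ?_ ?_ ?_
  · rintro ⟨x, y⟩ h
    simp only [Finset.mem_sigma] at h
    rw [hf x h.1 y h.2]
    exact ch_add_self _
  · rintro ⟨x, y⟩ h _ h2
    simp only [Finset.mem_sigma] at h
    simp only [Sigma.mk.injEq] at h2
    exact (ht x h.1 y h.2).2.2 h2.1.symm
  · rintro ⟨x, y⟩ h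
    simp only [Finset.mem_sigma] at h ⊢
    exact ⟨(ht x h.1 y h.2).1, (ht x h.1 y h.2).2.1⟩
  · rintro ⟨x, y⟩ h
    rfl

lemma bd_sdA {X Y : Type*} (b : Finset X → Y) (m : ℕ) : ∀ σ : Finset X, σ.card = m + 1 →
    bd (sdA b (m + 1) σ) = ∑ x ∈ σ, sdA b m (σ.erase x) := by
  induction m with
  | zero =>
    intro σ hσ
    simp only [sdA]
    rw [bd_cone, map_sum]
    simp [bd_single]
  | succ m ih =>
    intro σ hσ
    rw [sdA, bd_cone, map_sum]
    have : ∑ x ∈ σ, bd (sdA b (m + 1) (σ.erase x)) = 0 := by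
      rw [Finset.sum_congr rfl (fun x hx => ih (σ.erase x)
        (by rw [Finset.card_erase_of_mem hx]; omega))]
      apply sum_swap_zero
      · intro x hx y hy
        simp only [Finset.mem_erase] at hy ⊢
        exact ⟨hy.2, ⟨hy.1.symm, hx⟩, hy.1.symm⟩
      · intro x hx y hy
        rw [Finset.erase_right_comm]
    rw [this]; simp

lemma bd_sd {X Y : Type*} (b : Finset X → Y) (z : Ch X) : bd (sd b z) = sd b (bd z) := by
  have : (bd ∘ₗ sd b : Ch X →ₗ[ZMod 2] Ch Y) = sd b ∘ₗ bd := by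
    apply Finsupp.lhom_ext'
    intro σ
    apply LinearMap.ext_ring
    simp only [LinearMap.comp_apply, Finsupp.lsingle_apply]
    rw [sd_single, bd_single, map_sum]
    rcases hc : σ.card with _ | m
    · rw [Finset.card_eq_zero.1 hc]; simp [sdA, bd_single]
    · rw [bd_sdA b m σ hc]
      apply Finset.sum_congr rfl
      intro x hx
      rw [sd_single, Finset.card_erase_of_mem hx, hc]
      simp
  exact LinearMap.congr_fun this z

end
end TOMD

namespace TOMD
noncomputable section
open scoped Classical

abbrev Ty (n d : ℕ) := Fin n → Finset (Fin d)

def Sep {n d : ℕ} (X Y : Ty n d) : Prop :=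
  ∃ (ξ : Fin d → ℤ) (μ : Fin n → ℤ),
    (∀ i, ∀ k ∈ X i, μ i ≤ ξ k ∧ (μ i = ξ k → k ∈ Y i)) ∧
    (∀ i, ∀ k ∈ Y i, ξ k ≤ μ i ∧ (ξ k = μ i → k ∈ X i))

lemma Sep.acyclic {n d : ℕ} {X Y : Ty n d} (h : Sep X Y) : CompAcyclic X Y := by
  obtain ⟨ξ, μ, h1, h2⟩ := h
  have hs : ∀ j k, CompStep X Y j k → ξ k ≤ ξ j := by
    rintro j k ⟨i, hj, hk, -⟩
    exact (h2 i k hk).1.trans (h1 i j hj).1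
  rintro ⟨j, k, ⟨i, hj, hk, hjk, hn⟩, hr⟩
  have hall : ∀ j', Relation.ReflTransGen (CompStep X Y) k j' → ξ j' ≤ ξ k := by
    intro j' hr'
    induction hr' with
    | refl => exact le_refl _
    | tail _ hst ih => exact (hs _ _ hst).trans ih
  have hle : ξ j ≤ ξ k := hall j hr
  have a1 := h1 i j hj
  have a2 := h2 i k hk
  have e1 : μ i = ξ j := le_antisymm a1.1 (hle.trans a2.1)
  have e2 : ξ k = μ i := le_antisymm a2.1 (e1.le.trans hle)
  exact hn ⟨a1.2 e1, a2.2 e2⟩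

lemma Sep.of_acyclic {n d : ℕ} {X Y : Ty n d} (h : CompAcyclic X Y) : Sep X Y := by
  let R : Fin d → Finset (Fin d) := fun k =>
    Finset.univ.filter (fun j => Relation.ReflTransGen (CompStep X Y) k j)
  have hR : ∀ j k, CompStep X Y j k → R k ⊆ R j := by
    intro j k hjk x hx
    simp only [R, Finset.mem_filter, Finset.mem_univ, true_and] at hx ⊢
    exact Relation.ReflTransGen.head hjk hx
  have hRd : ∀ j k, CompDirStep X Y j k → (R k).card < (R j).card := by
    rintro j k hjk
    apply Finset.card_lt_card
    refine ⟨hR j k ?_, fun hc => ?_⟩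
    · obtain ⟨i, a, b, c, -⟩ := hjk
      exact ⟨i, a, b, c⟩
    · have : j ∈ R k := hc (by simp [R, Relation.ReflTransGen.refl])
      simp only [R, Finset.mem_filter, Finset.mem_univ, true_and] at this
      exact h ⟨j, k, hjk, this⟩
  have hR1 : ∀ k, 1 ≤ (R k).card := fun k =>
    Finset.card_pos.2 ⟨k, by simp [R, Relation.ReflTransGen.refl]⟩
  have hle : ∀ i j k, j ∈ X i → k ∈ Y i → (R k).card ≤ (R j).card := by
    intro i j k hj hk
    by_cases hjk : j = k
    · rw [hjk]
    · exact Finset.card_le_card (hR j k ⟨i, hj, hk, hjk⟩)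
  have hlt : ∀ i j k, j ∈ X i → k ∈ Y i → ¬ (j ∈ Y i ∧ k ∈ X i) →
      (R k).card < (R j).card := by
    intro i j k hj hk hn
    by_cases hjk : j = k
    · subst hjk; exact absurd ⟨hk, hj⟩ hn
    · exact hRd j k ⟨i, hj, hk, hjk, hn⟩
  let μ : Fin n → ℕ := fun i =>
    if hx : ∃ k, k ∈ X i ∧ k ∈ Y i then 2 * (R hx.choose).card
    else (Y i).sup (fun k => 2 * (R k).card + 1)
  refine ⟨fun k => ((2 * (R k).card : ℕ) : ℤ), fun i => (μ i : ℤ), ?_, ?_⟩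
  · intro i k hk
    simp only [Nat.cast_le, Nat.cast_inj]
    by_cases hx : ∃ k, k ∈ X i ∧ k ∈ Y i
    · have e : μ i = 2 * (R hx.choose).card := dif_pos hx
      have hc := hx.choose_spec
      rw [e]
      refine ⟨?_, fun he => ?_⟩
      · have := hle i k _ hk hc.2; omega
      · by_contra hn
        have := hlt i k _ hk hc.2 (fun h => hn h.1)
        omega
    · have e : μ i = (Y i).sup (fun k => 2 * (R k).card + 1) := dif_neg hx
      have : μ i < 2 * (R k).card := by
        rw [e, Finset.sup_lt_iff (by have := hR1 k; simp only [Nat.bot_eq_zero]; omega)]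
        intro k' hk'
        have := hlt i k k' hk hk' (fun h => hx ⟨k, hk, h.1⟩)
        omega
      exact ⟨this.le, fun h => absurd h this.ne⟩
  · intro i k hk
    simp only [Nat.cast_le, Nat.cast_inj]
    by_cases hx : ∃ k, k ∈ X i ∧ k ∈ Y i
    · have e : μ i = 2 * (R hx.choose).card := dif_pos hx
      have hc := hx.choose_spec
      rw [e]
      refine ⟨?_, fun he => ?_⟩
      · have := hle i _ k hc.1 hk; omega
      · by_contra hn
        have := hlt i _ k hc.1 hk (fun h => hn h.2)
        omega
    · have e : μ i = (Y i).sup (fun k => 2 * (R k).card + 1) := dif_neg hx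
      have : 2 * (R k).card + 1 ≤ μ i := by
        rw [e]; exact Finset.le_sup (f := fun k => 2 * (R k).card + 1) hk
      exact ⟨by omega, fun h => by omega⟩

lemma Sep.symm {n d : ℕ} {X Y : Ty n d} (h : Sep X Y) : Sep Y X := by
  obtain ⟨ξ, μ, h1, h2⟩ := h
  refine ⟨fun k => - ξ k, fun i => - μ i, fun i k hk => ?_, fun i k hk => ?_⟩
  · exact ⟨neg_le_neg (h2 i k hk).1, fun e => (h2 i k hk).2 (neg_injective e).symm⟩
  · exact ⟨neg_le_neg (h1 i k hk).1, fun e => (h1 i k hk).2 (neg_injective e).symm⟩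

lemma mem_dual {n d : ℕ} (X : Ty n d) (k : Fin d) (i : Fin n) :
    i ∈ dualType X k ↔ k ∈ X i := by simp [dualType]

lemma dual_dual {n d : ℕ} (X : Ty n d) : dualType (dualType X) = X := by
  ext i k; simp [dualType]

lemma Sep.dual {n d : ℕ} {X Y : Ty n d} (h : Sep X Y) : Sep (dualType X) (dualType Y) := by
  obtain ⟨ξ, μ, h1, h2⟩ := h
  refine ⟨fun k => - μ k, fun i => - ξ i, fun i k hk => ?_, fun i k hk => ?_⟩
  · rw [mem_dual] at hk ⊢
    exact ⟨neg_le_neg (h1 k i hk).1, fun e => (h1 k i hk).2 (neg_injective e).symm⟩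
  · rw [mem_dual] at hk ⊢
    exact ⟨neg_le_neg (h2 k i hk).1, fun e => (h2 k i hk).2 (neg_injective e).symm⟩

lemma Sep.face {n d : ℕ} {X X' Y : Ty n d} (h : Sep X Y) (a : Fin n → ℤ) (b : Fin d → ℤ)
    (hsub : ∀ i, X' i ⊆ X i)
    (hab : ∀ i, ∀ k ∈ X i, b k ≤ a i ∧ (a i = b k ↔ k ∈ X' i)) : Sep X' Y := by
  obtain ⟨ξ, μ, h1, h2⟩ := h
  set N : ℤ := 1 + (∑ i, |a i| + ∑ k, |b k|) with hN
  have ha : ∀ i, |a i| ≤ ∑ i, |a i| := fun i =>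
    Finset.single_le_sum (f := fun i => |a i|) (fun _ _ => abs_nonneg _) (Finset.mem_univ i)
  have hb : ∀ k, |b k| ≤ ∑ k, |b k| := fun i =>
    Finset.single_le_sum (f := fun i => |b i|) (fun _ _ => abs_nonneg _) (Finset.mem_univ i)
  have hlt : ∀ i k, |a i - b k| < N := by
    intro i k
    have := abs_sub (a i) (b k)
    have := ha i; have := hb k
    rw [hN]; linarith
  have hNpos : 0 < N := lt_of_le_of_lt (abs_nonneg _) (by
    have : |(0:ℤ)| < N := by
      rw [hN, abs_zero]
      have := Finset.sum_nonneg (f := fun i => |a i|) (s := Finset.univ) (fun _ _ => abs_nonneg _)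
      have := Finset.sum_nonneg (f := fun i => |b i|) (s := Finset.univ) (fun _ _ => abs_nonneg _)
      linarith
    exact this)
  refine ⟨fun k => N * ξ k + b k, fun i => N * μ i + a i, fun i k hk => ?_, fun i k hk => ?_⟩
  · obtain ⟨c1, c2⟩ := h1 i k (hsub i hk)
    have c3 := (hab i k (hsub i hk)).2.2 hk
    dsimp only
    rw [c3]
    refine ⟨by nlinarith, fun e => c2 ?_⟩
    have : N * μ i = N * ξ k := by linarith
    exact mul_left_cancel₀ hNpos.ne' this
  · obtain ⟨c1, c2⟩ := h2 i k hk
    dsimp only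
    rcases c1.lt_or_eq with hl | he
    · have := abs_lt.1 (hlt i k)
      have : ξ k + 1 ≤ μ i := hl
      have : N * ξ k + N ≤ N * μ i := by nlinarith
      exact ⟨by linarith, fun e => by linarith⟩
    · obtain ⟨c3, c4⟩ := hab i k (c2 he)
      rw [he]
      exact ⟨by linarith, fun e => c4.1 (by linarith)⟩

/-! ### refinement -/

def rf {α : Type*} (h : α → ℤ) (s : Finset α) : Finset α := s.filter (fun k => ∀ k' ∈ s, h k ≤ h k')

lemma mem_rf {α : Type*} {h : α → ℤ} {s : Finset α} {k : α} :
    k ∈ rf h s ↔ k ∈ s ∧ ∀ k' ∈ s, h k ≤ h k' := by simp [rf]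

lemma rf_nonempty {α : Type*} (h : α → ℤ) {s : Finset α} (hs : s.Nonempty) : (rf h s).Nonempty := by
  obtain ⟨k, hk, hm⟩ := s.exists_min_image h hs
  exact ⟨k, mem_rf.2 ⟨hk, hm⟩⟩

lemma rf_empty {α : Type*} (h : α → ℤ) : rf h (∅ : Finset α) = ∅ := by simp [rf]

lemma rf_subset {α : Type*} (h : α → ℤ) (s : Finset α) : rf h s ⊆ s := Finset.filter_subset _ _

lemma rf_zero {α : Type*} (s : Finset α) : rf (fun _ => (0:ℤ)) s = s := by simp [rf]

lemma rf_comp {α : Type*} [Fintype α] (h h' : α → ℤ) :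
    ∃ g : α → ℤ, ∀ s, rf h' (rf h s) = rf g s := by
  set N : ℤ := 1 + 2 * ∑ k, |h' k| with hN
  have hb : ∀ k, |h' k| ≤ ∑ k, |h' k| := fun i =>
    Finset.single_le_sum (f := fun i => |h' i|) (fun _ _ => abs_nonneg _) (Finset.mem_univ i)
  have hlt : ∀ k k', h' k - h' k' < N := by
    intro k k'
    have := abs_le.1 (hb k); have := abs_le.1 (hb k')
    rw [hN]; linarith
  have key : ∀ k k', h k < h k' → N * h k + h' k < N * h k' + h' k' := by
    intro k k' hk
    have := hlt k k'
    have h0 := hlt k k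
    have : h k + 1 ≤ h k' := hk
    have : N * h k + N ≤ N * h k' := by nlinarith
    linarith
  refine ⟨fun k => N * h k + h' k, fun s => ?_⟩
  ext k
  simp only [mem_rf]
  constructor
  · rintro ⟨⟨h1, h2⟩, h3⟩
    refine ⟨h1, fun k' hk' => ?_⟩
    rcases (h2 k' hk').lt_or_eq with hl | he
    · exact (key _ _ hl).le
    · have := h3 k' ⟨hk', fun k'' hk'' => he ▸ h2 k'' hk''⟩
      rw [he]; linarith
  · rintro ⟨h1, h2⟩
    have h3 : ∀ k' ∈ s, h k ≤ h k' := fun k' hk' => by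
      by_contra hc
      have := key _ _ (not_le.1 hc)
      have := h2 k' hk'
      linarith
    refine ⟨⟨h1, h3⟩, fun k' hk' => ?_⟩
    have e : h k = h k' := le_antisymm (h3 k' hk'.1) (hk'.2 k h1)
    have := h2 k' hk'.1
    rw [e] at this; linarith

def hP {α : Type*} [DecidableEq α] : List (Finset α) → α → ℤ
  | [], _ => 0
  | p :: rest, k => if k ∈ p then 0 else 1 + hP rest k

lemma hP_nonneg {α : Type*} [DecidableEq α] (P : List (Finset α)) (k : α) : 0 ≤ hP P k := by
  induction P with
  | nil => simp [hP]
  | cons p rest ih => simp only [hP]; split_ifs <;> omega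

lemma refineEntry_eq {α : Type*} [DecidableEq α] (P : List (Finset α)) (s : Finset α)
    (hs : s ⊆ P.foldr (· ∪ ·) ∅) : refineEntry s P = rf (hP P) s := by
  induction P with
  | nil =>
    simp only [List.foldr_nil, Finset.subset_empty] at hs
    rw [hs, rf_empty]; rfl
  | cons p rest ih =>
    simp only [refineEntry]
    split_ifs with hc
    · obtain ⟨k0, hk0⟩ := hc
      rw [Finset.mem_inter] at hk0
      ext k
      simp only [Finset.mem_inter, mem_rf, hP]
      constructor
      · rintro ⟨h1, h2⟩
        refine ⟨h1, fun k' _ => ?_⟩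
        rw [if_pos h2]
        have := hP_nonneg rest k'
        split_ifs <;> omega
      · rintro ⟨h1, h2⟩
        refine ⟨h1, ?_⟩
        by_contra hn
        have h3 := h2 k0 hk0.1
        rw [if_neg hn, if_pos hk0.2] at h3
        have := hP_nonneg rest k
        omega
    · have hnp : ∀ k ∈ s, k ∉ p := fun k hk hp => hc ⟨k, Finset.mem_inter.2 ⟨hk, hp⟩⟩
      rw [ih]
      · ext k
        simp only [mem_rf, hP]
        refine and_congr_right fun hk => forall₂_congr fun k' hk' => ?_
        rw [if_neg (hnp k hk), if_neg (hnp k' hk')]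
        omega
      · intro k hk
        have := hs hk
        simp only [List.foldr_cons, Finset.mem_union] at this
        exact this.resolve_left (hnp k hk)

lemma refineEntry_lev {α : Type*} [Fintype α] [DecidableEq α] (h : α → ℤ) (l : List ℤ)
    (hl : l.Pairwise (· < ·)) (s : Finset α) (hs : ∀ k ∈ s, h k ∈ l) :
    refineEntry s (l.map (fun v => Finset.univ.filter (fun k => h k = v))) = rf h s := by
  induction l with
  | nil =>
    have : s = ∅ := Finset.eq_empty_of_forall_notMem (fun k hk => by simpa using hs k hk)
    rw [this, rf_empty]; rfl
  | cons v l ih =>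
    rw [List.pairwise_cons] at hl
    simp only [List.map_cons, refineEntry]
    have hge : ∀ k ∈ s, v ≤ h k := by
      intro k hk
      rcases List.mem_cons.1 (hs k hk) with h1 | h1
      · rw [h1]
      · exact (hl.1 _ h1).le
    split_ifs with hc
    · obtain ⟨k0, hk0⟩ := hc
      simp only [Finset.mem_inter, Finset.mem_filter, Finset.mem_univ, true_and] at hk0
      ext k
      simp only [Finset.mem_inter, mem_rf, Finset.mem_filter, Finset.mem_univ, true_and]
      refine and_congr_right fun hk => ?_
      constructor
      · intro e k' hk'; rw [e]; exact hge k' hk'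
      · intro h1; exact le_antisymm (hk0.2 ▸ h1 k0 hk0.1) (hge k hk)
    · refine ih hl.2 (fun k hk => ?_)
      refine (List.mem_cons.1 (hs k hk)).resolve_left (fun h1 => hc ⟨k, ?_⟩)
      simp [hk, h1]

lemma exists_partition {α : Type*} [Fintype α] [DecidableEq α] (h : α → ℤ) :
    ∃ P : List (Finset α), IsOrderedPartition P ∧ ∀ s, refineEntry s P = rf h s := by
  have hsort := Finset.sortedLT_sort (Finset.univ.image h)
  refine ⟨((Finset.univ.image h).sort (· ≤ ·)).map
    (fun v => Finset.univ.filter (fun k => h k = v)), ⟨?_, ?_, ?_⟩, fun s => ?_⟩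
  · intro p hp
    simp only [List.mem_map, Finset.mem_sort, Finset.mem_image, Finset.mem_univ, true_and] at hp
    obtain ⟨v, ⟨k, hk⟩, rfl⟩ := hp
    exact ⟨k, by simp [hk]⟩
  · rw [List.pairwise_map]
    refine hsort.pairwise.imp ?_
    intro a b hab
    rw [Finset.disjoint_left]
    intro k h1 h2
    simp only [Finset.mem_filter, Finset.mem_univ, true_and] at h1 h2
    omega
  · have : ∀ (l : List ℤ) (k : α), h k ∈ l →
        k ∈ (l.map (fun v => Finset.univ.filter (fun k => h k = v))).foldr (· ∪ ·) ∅ := by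
      intro l k
      induction l with
      | nil => simp
      | cons v l ih =>
        intro hk
        simp only [List.map_cons, List.foldr_cons, Finset.mem_union, Finset.mem_filter,
          Finset.mem_univ, true_and]
        rcases List.mem_cons.1 hk with h1 | h1
        · exact Or.inl h1
        · exact Or.inr (ih h1)
    rw [Finset.eq_univ_iff_forall]
    intro k
    exact this _ k (by simp)
  · exact refineEntry_lev h _ hsort.pairwise s (fun k _ => by simp)

/-! ### generalised tropical oriented matroids -/

structure T {n d : ℕ} (R : Finset (Fin n)) (K : Finset (Fin d)) (M : Set (Ty n d)) : Prop where
  sub : ∀ A ∈ M, ∀ i, A i ⊆ K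
  ne : ∀ A ∈ M, ∀ i ∈ R, (A i).Nonempty
  off : ∀ A ∈ M, ∀ i, i ∉ R → A i = ∅
  bdry : ∀ k ∈ K, (fun i => if i ∈ R then ({k} : Finset (Fin d)) else ∅) ∈ M
  sep : ∀ A ∈ M, ∀ B ∈ M, Sep A B
  elim : ∀ A ∈ M, ∀ B ∈ M, ∀ j ∈ R, ∃ C ∈ M, C j = A j ∪ B j ∧
    ∀ k, C k = A k ∨ C k = B k ∨ C k = A k ∪ B k
  ref : ∀ A ∈ M, ∀ h : Fin d → ℤ, (fun i => rf h (A i)) ∈ M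

lemma T.of_isTOM {n d : ℕ} {M : Set (Ty n d)} (h : IsTOM n d M) :
    T Finset.univ Finset.univ M := by
  obtain ⟨h1, h2, h3, h4, h5⟩ := h
  refine ⟨fun _ _ _ => Finset.subset_univ _, fun A hA i _ => h1 A hA i,
    fun _ _ i hi => absurd (Finset.mem_univ i) hi, fun k _ => by simpa using h2 k,
    fun A hA B hB => Sep.of_acyclic (h3 A hA B hB), fun A hA B hB j _ => h4 A hA B hB j,
    fun A hA h => ?_⟩
  obtain ⟨P, hP, hr⟩ := exists_partition h
  have := h5 A hA P hP
  have e : refineType A P = fun i => rf h (A i) := funext fun i => hr _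
  rwa [e] at this

def res {n d : ℕ} (R : Finset (Fin n)) (E : Ty n d) : Ty n d := fun i => if i ∈ R then E i else ∅

lemma T.restrict {n d : ℕ} {R R' : Finset (Fin n)} {K Q : Finset (Fin d)} {M : Set (Ty n d)}
    (h : T R K M) (hR : R' ⊆ R) (hQ : Q ⊆ K) :
    T R' Q {A | ∃ E ∈ M, (∀ i, E i ⊆ Q) ∧ A = res R' E} := by
  refine ⟨?_, ?_, ?_, ?_, ?_, ?_, ?_⟩
  · rintro A ⟨E, hE, hEQ, rfl⟩ i
    simp only [res]; split_ifs
    · exact hEQ i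
    · simp
  · rintro A ⟨E, hE, hEQ, rfl⟩ i hi
    simp only [res, if_pos hi]; exact h.ne E hE i (hR hi)
  · rintro A ⟨E, hE, hEQ, rfl⟩ i hi
    simp only [res, if_neg hi]
  · intro k hk
    refine ⟨_, h.bdry k (hQ hk), fun i => ?_, ?_⟩
    · split_ifs <;> simp [hk]
    · funext i
      simp only [res]
      by_cases hi : i ∈ R'
      · simp [hi, hR hi]
      · simp [hi]
  · rintro A ⟨E, hE, hEQ, rfl⟩ B ⟨F, hF, hFQ, rfl⟩
    obtain ⟨ξ, μ, a1, a2⟩ := h.sep E hE F hF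
    refine ⟨ξ, μ, fun i k hk => ?_, fun i k hk => ?_⟩ <;>
    · by_cases hi : i ∈ R'
      · simp only [res, if_pos hi] at hk ⊢
        first | exact a1 i k hk | exact a2 i k hk
      · simp [res, hi] at hk
  · rintro A ⟨E, hE, hEQ, rfl⟩ B ⟨F, hF, hFQ, rfl⟩ j hj
    obtain ⟨C, hC, c1, c2⟩ := h.elim E hE F hF j (hR hj)
    refine ⟨_, ⟨C, hC, fun i => ?_, rfl⟩, ?_, fun k => ?_⟩
    · rcases c2 i with e | e | e <;> rw [e]
      · exact hEQ i
      · exact hFQ i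
      · exact Finset.union_subset (hEQ i) (hFQ i)
    · simp only [res, if_pos hj, c1]
    · simp only [res]
      split_ifs
      · exact c2 k
      · simp
  · rintro A ⟨E, hE, hEQ, rfl⟩ g
    refine ⟨_, h.ref E hE g, fun i => (rf_subset _ _).trans (hEQ i), ?_⟩
    funext i
    simp only [res]
    split_ifs
    · rfl
    · exact rf_empty _

lemma T.face_mem {n d : ℕ} {R : Finset (Fin n)} {K : Finset (Fin d)} {M : Set (Ty n d)}
    (h : T R K M) {A V : Ty n d} (hV : V ∈ M) (hAV : ∀ i, A i ⊆ V i) (hs : Sep A V)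
    (hne : ∀ i ∈ R, (A i).Nonempty) : A ∈ M := by
  obtain ⟨ξ, μ, h1, h2⟩ := hs
  have e : A = fun i => rf (fun k => - ξ k) (V i) := by
    funext i
    by_cases hi : i ∈ R
    · obtain ⟨a, ha⟩ := hne i hi
      have ha2 : ξ a = μ i := le_antisymm (h2 i a (hAV i ha)).1 (h1 i a ha).1
      ext k
      rw [mem_rf]
      constructor
      · intro hk
        refine ⟨hAV i hk, fun k' hk' => neg_le_neg ?_⟩
        exact (h2 i k' hk').1.trans (h1 i k hk).1
      · rintro ⟨hk, hm⟩
        have := neg_le_neg_iff.1 (hm a (hAV i ha))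
        exact (h2 i k hk).2 (le_antisymm (h2 i k hk).1 (ha2 ▸ this))
    · have e0 := h.off V hV i hi
      rw [e0, rf_empty]
      exact Finset.subset_empty.1 (e0 ▸ hAV i)
  rw [e]
  exact h.ref V hV _

def MaxP {n d : ℕ} (R : Finset (Fin n)) (K : Finset (Fin d)) : Prop :=
  ∀ M : Set (Ty n d), T R K M → ∀ A : Ty n d, (∀ i, A i ⊆ K) → (∀ i ∈ R, (A i).Nonempty) →
    (∀ i, i ∉ R → A i = ∅) → (∀ D ∈ M, Sep A D) → A ∈ M

end
end TOMD

namespace TOMD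
noncomputable section
open scoped Classical

variable {n d : ℕ}

def rfc (c : Finset (Finset (Fin d))) (A : Ty n d) : Ty n d :=
  fun i => (A i).filter (fun k => ∀ U ∈ c, (A i ∩ U).Nonempty → k ∈ U)

lemma mem_rfc {c : Finset (Finset (Fin d))} {A : Ty n d} {i : Fin n} {k : Fin d} :
    k ∈ rfc c A i ↔ k ∈ A i ∧ ∀ U ∈ c, (A i ∩ U).Nonempty → k ∈ U := by simp [rfc]

lemma rfc_empty (A : Ty n d) : rfc ∅ A = A := by
  funext i; ext k; simp [mem_rfc]

lemma rfc_le (c : Finset (Finset (Fin d))) (A : Ty n d) : rfc c A ≤ A :=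
  fun _ => Finset.filter_subset _ _

lemma rfc_anti {c c' : Finset (Finset (Fin d))} (h : c ⊆ c') (A : Ty n d) : rfc c' A ≤ rfc c A := by
  intro i k hk
  rw [mem_rfc] at hk ⊢
  exact ⟨hk.1, fun U hU => hk.2 U (h hU)⟩

lemma rfc_insert {c : Finset (Finset (Fin d))} {U : Finset (Fin d)}
    (hU : ∀ W ∈ c, U ⊆ W ∨ W ⊆ U) (A : Ty n d) : rfc (insert U c) A = rfc {U} (rfc c A) := by
  funext i; ext k
  simp only [mem_rfc, Finset.mem_insert, Finset.mem_singleton, forall_eq_or_imp, forall_eq]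
  constructor
  · rintro ⟨h1, h2, h3⟩
    refine ⟨⟨h1, h3⟩, fun ⟨x, hx⟩ => h2 ⟨x, ?_⟩⟩
    rw [Finset.mem_inter, mem_rfc] at hx
    exact Finset.mem_inter.2 ⟨hx.1.1, hx.2⟩
  · rintro ⟨⟨h1, h3⟩, h2⟩
    refine ⟨h1, fun ⟨x, hx⟩ => ?_, h3⟩
    rw [Finset.mem_inter] at hx
    by_cases hall : ∀ W ∈ c, (A i ∩ W).Nonempty → x ∈ W
    · exact h2 ⟨x, Finset.mem_inter.2 ⟨mem_rfc.2 ⟨hx.1, hall⟩, hx.2⟩⟩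
    · push Not at hall
      obtain ⟨W, hW, hWn, hxW⟩ := hall
      rcases hU W hW with h | h
      · exact absurd (h hx.2) hxW
      · exact h (h3 W hW hWn)

lemma rfc_single (U : Finset (Fin d)) (A : Ty n d) :
    rfc {U} A = fun i => rf (fun k => if k ∈ U then 0 else 1) (A i) := by
  funext i; ext k
  simp only [mem_rfc, mem_rf, Finset.mem_singleton, forall_eq]
  refine and_congr_right fun hk => ?_
  constructor
  · intro h k' hk'
    by_cases h1 : k' ∈ U
    · rw [if_pos h1, if_pos (h ⟨k', Finset.mem_inter.2 ⟨hk', h1⟩⟩)]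
    · rw [if_neg h1]; split_ifs <;> norm_num
  · rintro h ⟨x, hx⟩
    rw [Finset.mem_inter] at hx
    have := h x hx.1
    rw [if_pos hx.2] at this
    by_contra hn
    rw [if_neg hn] at this
    norm_num at this

lemma rfc_sub {c : Finset (Finset (Fin d))} (hc : ∀ U ∈ c, ∀ W ∈ c, U ⊆ W ∨ W ⊆ U)
    {S : Finset (Fin d)} (hS : S ∈ c) (A : Ty n d) : rfc c A = rfc c (rfc {S} A) := by
  funext i; ext k
  rw [mem_rfc, mem_rfc]
  have key : ∀ x, x ∈ rfc {S} A i ↔ x ∈ A i ∧ ((A i ∩ S).Nonempty → x ∈ S) := by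
    intro x; rw [mem_rfc]; simp
  constructor
  · rintro ⟨h1, h2⟩
    refine ⟨(key k).2 ⟨h1, h2 S hS⟩, fun W hW ⟨x, hx⟩ => h2 W hW ⟨x, ?_⟩⟩
    rw [Finset.mem_inter] at hx ⊢
    exact ⟨((key x).1 hx.1).1, hx.2⟩
  · rintro ⟨h1, h2⟩
    rw [key] at h1
    refine ⟨h1.1, fun W hW ⟨x, hx⟩ => ?_⟩
    rw [Finset.mem_inter] at hx
    by_cases hAS : (A i ∩ S).Nonempty
    · rcases hc W hW S hS with h | h
      · exact h2 W hW ⟨x, Finset.mem_inter.2 ⟨(key x).2 ⟨hx.1, fun _ => h hx.2⟩, hx.2⟩⟩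
      · exact h (h1.2 hAS)
    · exact h2 W hW ⟨x, Finset.mem_inter.2 ⟨(key x).2 ⟨hx.1, fun h => absurd h hAS⟩, hx.2⟩⟩

def ex (K : Finset (Fin d)) (c : Finset (Finset (Fin d))) : Finset (Finset (Fin d)) :=
  K.powerset.filter (fun U => U ≠ ∅ ∧ U ≠ K ∧ U ∉ c ∧ ∀ W ∈ c, U ⊆ W ∨ W ⊆ U)

lemma mem_ex {K : Finset (Fin d)} {c : Finset (Finset (Fin d))} {U : Finset (Fin d)} :
    U ∈ ex K c ↔ U ⊆ K ∧ U ≠ ∅ ∧ U ≠ K ∧ U ∉ c ∧ ∀ W ∈ c, U ⊆ W ∨ W ⊆ U := by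
  simp [ex]

structure Flag (K : Finset (Fin d)) (c : Finset (Finset (Fin d))) : Prop where
  chain : ∀ U ∈ c, ∀ W ∈ c, U ⊆ W ∨ W ⊆ U
  sub : ∀ U ∈ c, U ⊆ K
  ne : ∀ U ∈ c, U ≠ ∅
  neK : ∀ U ∈ c, U ≠ K

lemma Flag.insert {K : Finset (Fin d)} {c : Finset (Finset (Fin d))} (h : Flag K c)
    {U : Finset (Fin d)} (hU : U ∈ ex K c) : Flag K (insert U c) := by
  rw [mem_ex] at hU
  obtain ⟨h1, h2, h3, h4, h5⟩ := hU
  refine ⟨?_, ?_, ?_, ?_⟩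
  · intro A hA B hB
    rw [Finset.mem_insert] at hA hB
    rcases hA with rfl | hA
    · rcases hB with rfl | hB
      · exact Or.inl (Finset.Subset.refl _)
      · exact h5 B hB
    · rcases hB with rfl | hB
      · exact (h5 A hA).symm
      · exact h.chain A hA B hB
  all_goals
    intro A hA
    rw [Finset.mem_insert] at hA
    rcases hA with rfl | hA
  · exact h1
  · exact h.sub A hA
  · exact h2
  · exact h.ne A hA
  · exact h3
  · exact h.neK A hA

lemma Flag.empty (K : Finset (Fin d)) : Flag K ∅ := by constructor <;> simp

section
variable {X : Type*}

def Om (K : Finset (Fin d)) (pt : Ty n d → X) (V : Ty n d) : ℕ → Finset (Finset (Fin d)) → Ch X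
  | 0, c => Finsupp.single {pt (rfc c V)} 1
  | r + 1, c => cone (pt (rfc c V)) (∑ U ∈ ex K c, Om K pt V r (insert U c))

/-- evenness -/
lemma ex_even {K : Finset (Fin d)} {c : Finset (Finset (Fin d))} (hc : Flag K c)
    (hcard : c.card + 2 = K.card) (z : Ch X) : ∑ _U ∈ ex K c, z = 0 := by
  have hinj : Set.InjOn Finset.card (c : Set (Finset (Fin d))) := by
    intro U hU W hW h
    rcases hc.chain U hU W hW with h1 | h1
    · exact Finset.eq_of_subset_of_card_le h1 h.ge
    · exact (Finset.eq_of_subset_of_card_le h1 h.le).symm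
  have himg : c.image Finset.card ⊆ Finset.Icc 1 (K.card - 1) := by
    intro m hm
    obtain ⟨U, hU, rfl⟩ := Finset.mem_image.1 hm
    have h1 := Finset.card_pos.2 (Finset.nonempty_iff_ne_empty.2 (hc.ne U hU))
    have h2 := Finset.card_lt_card (Finset.ssubset_iff_subset_ne.2 ⟨hc.sub U hU, hc.neK U hU⟩)
    rw [Finset.mem_Icc]; omega
  have hone : (Finset.Icc 1 (K.card - 1) \ c.image Finset.card).card = 1 := by
    rw [Finset.card_sdiff_of_subset himg, Finset.card_image_of_injOn hinj, Nat.card_Icc]; omega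
  obtain ⟨s, hs⟩ := Finset.card_eq_one.1 hone
  have hs1 : s ∈ Finset.Icc 1 (K.card - 1) \ c.image Finset.card := by rw [hs]; simp
  rw [Finset.mem_sdiff, Finset.mem_Icc] at hs1
  obtain ⟨⟨hsa, hsb⟩, hsc⟩ := hs1
  have hother : ∀ m, 1 ≤ m → m ≤ K.card - 1 → m ≠ s → ∃ U ∈ c, U.card = m := by
    intro m h1 h2 h3
    by_contra hn
    have : m ∈ Finset.Icc 1 (K.card - 1) \ c.image Finset.card := by
      rw [Finset.mem_sdiff, Finset.mem_Icc]
      exact ⟨⟨h1, h2⟩, fun h => hn (by simpa using h)⟩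
    rw [hs] at this
    exact h3 (by simpa using this)
  have hcne : ∀ W ∈ c, W.card ≠ s := fun W hW h => hsc (Finset.mem_image.2 ⟨W, hW, h⟩)
  obtain ⟨A, hAK, hAc, hA1, hA2⟩ : ∃ A ⊆ K, A.card + 1 = s ∧ (∀ W ∈ c, W.card < s → W ⊆ A) ∧
      (∀ U : Finset (Fin d), s ≤ U.card → (∀ W ∈ c, U ⊆ W ∨ W ⊆ U) → A ⊆ U) := by
    by_cases h1 : s = 1
    · refine ⟨∅, by simp, by simp [h1], fun W hW h => ?_, fun _ _ _ => by simp⟩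
      have : W.card = 0 := by omega
      exact absurd (Finset.card_eq_zero.1 this) (hc.ne W hW)
    · obtain ⟨A, hA, hAc⟩ := hother (s - 1) (by omega) (by omega) (by omega)
      refine ⟨A, hc.sub A hA, by omega, fun W hW h => ?_, fun U hU h => ?_⟩
      · rcases hc.chain W hW A hA with h2 | h2
        · exact h2
        · exact (Finset.eq_of_subset_of_card_le h2 (by omega)).ge
      · rcases h A hA with h2 | h2
        · have := Finset.card_le_card h2; omega
        · exact h2
  obtain ⟨B, hBK, hBc, hB1, hB2⟩ : ∃ B ⊆ K, B.card = s + 1 ∧ (∀ W ∈ c, s < W.card → B ⊆ W) ∧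
      (∀ U ⊆ K, U.card ≤ s → (∀ W ∈ c, U ⊆ W ∨ W ⊆ U) → U ⊆ B) := by
    by_cases h1 : s = K.card - 1
    · refine ⟨K, by simp, by omega, fun W hW h => ?_, fun _ h _ _ => h⟩
      have := Finset.card_lt_card (Finset.ssubset_iff_subset_ne.2 ⟨hc.sub W hW, hc.neK W hW⟩)
      omega
    · obtain ⟨A, hA, hAc⟩ := hother (s + 1) (by omega) (by omega) (by omega)
      refine ⟨A, hc.sub A hA, by omega, fun W hW h => ?_, fun U _ hU h => ?_⟩
      · rcases hc.chain W hW A hA with h2 | h2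
        · exact (Finset.eq_of_subset_of_card_le h2 (by omega)).ge
        · exact h2
      · rcases h A hA with h2 | h2
        · exact h2
        · have := Finset.card_le_card h2; omega
  have hcards : ∀ U ∈ ex K c, U.card = s := by
    intro U hU
    have hU' := mem_ex.1 hU
    by_contra hne
    obtain ⟨W, hW, hWc⟩ := hother U.card
      (Finset.card_pos.2 (Finset.nonempty_iff_ne_empty.2 hU'.2.1))
      (by have := Finset.card_lt_card (Finset.ssubset_iff_subset_ne.2 ⟨hU'.1, hU'.2.2.1⟩); omega)
      hne
    apply hU'.2.2.2.1
    rcases hU'.2.2.2.2 W hW with h | h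
    · rw [Finset.eq_of_subset_of_card_le h hWc.le]; exact hW
    · rw [← Finset.eq_of_subset_of_card_le h hWc.ge]; exact hW
  have hAU : ∀ U ∈ ex K c, A ⊆ U ∧ U ⊆ B := fun U hU =>
    ⟨hA2 U (hcards U hU).ge (mem_ex.1 hU).2.2.2.2,
      hB2 U (mem_ex.1 hU).1 (hcards U hU).le (mem_ex.1 hU).2.2.2.2⟩
  have hcard2 : ∀ U ∈ ex K c, (A ∪ (B \ U)).card = s := by
    intro U hU
    rw [Finset.card_union_of_disjoint, Finset.card_sdiff_of_subset (hAU U hU).2, hcards U hU]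
    · omega
    · exact Finset.disjoint_of_subset_left (hAU U hU).1 Finset.disjoint_sdiff
  refine Finset.sum_involution (fun U _ => A ∪ (B \ U)) ?_ ?_ ?_ ?_
  · intro _ _; exact ch_add_self _
  · intro U hU _ h
    have h1 : B \ U ⊆ U := by
      intro x hx
      rw [← h]; exact Finset.mem_union_right _ hx
    have h2 : B \ U = ∅ := by
      rw [Finset.eq_empty_iff_forall_notMem]
      intro x hx
      exact (Finset.mem_sdiff.1 hx).2 (h1 hx)
    have h3 := Finset.card_sdiff_of_subset (hAU U hU).2
    rw [h2, Finset.card_empty, hcards U hU] at h3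
    omega
  · intro U hU
    have hc2 := hcard2 U hU
    rw [mem_ex]
    refine ⟨Finset.union_subset hAK (Finset.sdiff_subset.trans hBK), ?_, ?_, ?_, ?_⟩
    · intro h; rw [h, Finset.card_empty] at hc2; omega
    · intro h; rw [h] at hc2; omega
    · intro h; exact hcne _ h hc2
    · intro W hW
      rcases lt_or_gt_of_ne (hcne W hW) with h | h
      · exact Or.inr ((hA1 W hW h).trans Finset.subset_union_left)
      · refine Or.inl (Finset.union_subset ?_ (Finset.sdiff_subset.trans (hB1 W hW h)))
        exact hA2 W h.le (fun W' hW' => hc.chain W hW W' hW')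
  · intro U hU
    obtain ⟨h1, h2⟩ := hAU U hU
    ext x
    simp only [Finset.mem_union, Finset.mem_sdiff]
    have := @h1 x; have := @h2 x
    tauto

lemma bd_Om (K : Finset (Fin d)) (pt : Ty n d → X) (V : Ty n d) (r : ℕ) :
    ∀ c, Flag K c → c.card + r + 2 = K.card →
    bd (Om K pt V (r + 1) c) = ∑ U ∈ ex K c, Om K pt V r (insert U c) := by
  induction r with
  | zero =>
    intro c hc hcard
    rw [Om, bd_cone, map_sum]
    have : ∑ U ∈ ex K c, bd (Om K pt V 0 (insert U c)) = 0 := by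
      rw [← ex_even hc (by omega) (Finsupp.single (∅ : Finset X) (1 : ZMod 2))]
      apply Finset.sum_congr rfl
      intro U _
      rw [Om, bd_single]; simp
    rw [this, map_zero, add_zero]
  | succ r ih =>
    intro c hc hcard
    rw [Om, bd_cone, map_sum]
    have : ∑ U ∈ ex K c, bd (Om K pt V (r + 1) (insert U c)) = 0 := by
      rw [Finset.sum_congr rfl (fun U hU => ih (insert U c) (hc.insert hU)
        (by rw [Finset.card_insert_of_notMem (mem_ex.1 hU).2.2.2.1]; omega))]
      apply sum_swap_zero
      · intro U hU W hW
        rw [mem_ex] at hU hW ⊢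
        rw [mem_ex]
        obtain ⟨a1, a2, a3, a4, a5⟩ := hU
        obtain ⟨b1, b2, b3, b4, b5⟩ := hW
        rw [Finset.mem_insert, not_or] at b4
        refine ⟨⟨b1, b2, b3, b4.2, fun Y hY => b5 Y (Finset.mem_insert_of_mem hY)⟩,
          ⟨a1, a2, a3, ?_, ?_⟩, fun h => b4.1 h.symm⟩
        · rw [Finset.mem_insert, not_or]; exact ⟨fun h => b4.1 h.symm, a4⟩
        · intro Y hY
          rcases Finset.mem_insert.1 hY with rfl | hY
          · exact (b5 U (Finset.mem_insert_self _ _)).symm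
          · exact a5 Y hY
      · intro U _ W _
        rw [Finset.insert_comm]
    rw [this, map_zero, add_zero]

/-! splits -/

def Spl (K : Finset (Fin d)) (D : Ty n d) (Z : Finset (Fin d)) : Prop :=
  Z ⊆ K ∧ ∀ i, D i ⊆ Z ∨ Disjoint (D i) Z

def spl (K : Finset (Fin d)) (D : Ty n d) : Finset (Finset (Fin d)) :=
  K.powerset.filter (Spl K D)

lemma mem_spl {K : Finset (Fin d)} {D : Ty n d} {Z : Finset (Fin d)} :
    Z ∈ spl K D ↔ Spl K D Z := by
  simp only [spl, Finset.mem_filter, Finset.mem_powerset]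
  exact ⟨fun h => h.2, fun h => ⟨h.1, h⟩⟩

lemma Spl.mono {K : Finset (Fin d)} {D D' : Ty n d} {Z : Finset (Fin d)} (h : Spl K D Z)
    (hD : D' ≤ D) : Spl K D' Z :=
  ⟨h.1, fun i => (h.2 i).imp (fun h => Finset.Subset.trans (hD i) h)
    (fun h => Finset.disjoint_of_subset_left (hD i) h)⟩

lemma Spl.symmDiff {K : Finset (Fin d)} {D : Ty n d} {Z W : Finset (Fin d)} (h : Spl K D Z)
    (h' : Spl K D W) : Spl K D (symmDiff Z W) := by
  refine ⟨fun x hx => ?_, fun i => ?_⟩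
  · rw [Finset.mem_symmDiff] at hx
    rcases hx with hx | hx
    · exact h.1 hx.1
    · exact h'.1 hx.1
  · rcases h.2 i with h1 | h1 <;> rcases h'.2 i with h2 | h2
    · right; rw [Finset.disjoint_left]; intro x hx
      simp [Finset.mem_symmDiff, h1 hx, h2 hx]
    · left; intro x hx
      simp [Finset.mem_symmDiff, h1 hx, Finset.disjoint_left.1 h2 hx]
    · left; intro x hx
      simp [Finset.mem_symmDiff, h2 hx, Finset.disjoint_left.1 h1 hx]
    · right; rw [Finset.disjoint_left]; intro x hx
      simp [Finset.mem_symmDiff, Finset.disjoint_left.1 h1 hx, Finset.disjoint_left.1 h2 hx]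

lemma spl_rfc {K : Finset (Fin d)} {D : Ty n d} {U : Finset (Fin d)} (hU : U ⊆ K) :
    Spl K (rfc {U} D) U := by
  refine ⟨hU, fun i => ?_⟩
  by_cases h : (D i ∩ U).Nonempty
  · left; intro k hk
    rw [mem_rfc] at hk
    exact hk.2 U (by simp) h
  · right; rw [Finset.disjoint_left]; intro k hk hkU
    exact h ⟨k, Finset.mem_inter.2 ⟨rfc_le _ _ i hk, hkU⟩⟩

lemma spl_double {K : Finset (Fin d)} {D : Ty n d} {U : Finset (Fin d)} (hU : U ⊆ K)
    (hne : rfc {U} D ≠ D) : 2 * (spl K D).card ≤ (spl K (rfc {U} D)).card := by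
  have hns : ¬ Spl K D U := by
    intro h
    apply hne
    funext i; ext k
    rw [mem_rfc]
    refine ⟨fun h => h.1, fun hk => ⟨hk, ?_⟩⟩
    simp only [Finset.mem_singleton, forall_eq]
    rintro ⟨x, hx⟩
    rw [Finset.mem_inter] at hx
    rcases h.2 i with h1 | h1
    · exact h1 hk
    · exact absurd hx.2 (Finset.disjoint_left.1 h1 hx.1)
  have h1 : spl K D ∪ (spl K D).image (fun Z => symmDiff Z U) ⊆ spl K (rfc {U} D) := by
    intro Z hZ
    rw [Finset.mem_union, Finset.mem_image] at hZ
    rw [mem_spl]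
    rcases hZ with hZ | ⟨W, hW, rfl⟩
    · exact (mem_spl.1 hZ).mono (rfc_le _ _)
    · exact ((mem_spl.1 hW).mono (rfc_le _ _)).symmDiff (spl_rfc hU)
  have h2 : Disjoint (spl K D) ((spl K D).image (fun Z => symmDiff Z U)) := by
    rw [Finset.disjoint_left]
    intro Z hZ hZ2
    obtain ⟨W, hW, rfl⟩ := Finset.mem_image.1 hZ2
    apply hns
    have := (mem_spl.1 hW).symmDiff (mem_spl.1 hZ)
    rwa [symmDiff_symmDiff_cancel_left] at this
  have h3 := Finset.card_le_card h1
  rw [Finset.card_union_of_disjoint h2, Finset.card_image_of_injective _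
    (symmDiff_left_injective U)] at h3
  omega

lemma cone_Om (K : Finset (Fin d)) (pt : Ty n d → X) (V : Ty n d) (r : ℕ) (c) :
    cone (pt (rfc c V)) (Om K pt V r c) = 0 := by
  cases r with
  | zero => rw [Om, cone_single, if_pos (by simp)]
  | succ r => rw [Om, cone_cone]

lemma Om_vanish (K : Finset (Fin d)) (pt : Ty n d → X) (V : Ty n d) (r : ℕ) :
    ∀ c, 2 ^ K.card < (spl K (rfc c V)).card * 2 ^ r → Om K pt V r c = 0 := by
  induction r with
  | zero =>
    intro c h
    have : (spl K (rfc c V)).card ≤ 2 ^ K.card := by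
      rw [← Finset.card_powerset]; exact Finset.card_filter_le _ _
    omega
  | succ r ih =>
    intro c h
    rw [Om, map_sum]
    apply Finset.sum_eq_zero
    intro U hU
    have hU' := mem_ex.1 hU
    have e := rfc_insert hU'.2.2.2.2 V
    by_cases hne : rfc {U} (rfc c V) = rfc c V
    · rw [hne] at e
      rw [← e]
      exact cone_Om K pt V r (insert U c)
    · rw [ih (insert U c), map_zero]
      rw [e]
      have := spl_double hU'.1 hne
      calc 2 ^ K.card < _ := h
        _ = 2 * (spl K (rfc c V)).card * 2 ^ r := by ring
        _ ≤ _ := Nat.mul_le_mul_right _ this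

lemma Om_sub (K : Finset (Fin d)) (pt : Ty n d → X) (V : Ty n d) (S : Finset (Fin d)) (r : ℕ) :
    ∀ c, Flag K c → S ∈ c → Om K pt V r c = Om K pt (rfc {S} V) r c := by
  induction r with
  | zero => intro c hc hS; rw [Om, Om, rfc_sub hc.chain hS]
  | succ r ih =>
    intro c hc hS
    rw [Om, Om, rfc_sub hc.chain hS]
    congr 1
    exact Finset.sum_congr rfl (fun U hU => ih _ (hc.insert hU) (Finset.mem_insert_of_mem hS))

/-! swap -/

def tau (K S U : Finset (Fin d)) : Finset (Fin d) :=
  if U = S then K \ S else if U ⊆ S then U ∪ (K \ S) else U \ S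

lemma tau_cases {K S U : Finset (Fin d)} (h : U ⊆ S ∨ S ⊆ U) :
    (U = S ∧ tau K S U = K \ S) ∨ (U ⊂ S ∧ tau K S U = U ∪ (K \ S)) ∨
      (S ⊂ U ∧ tau K S U = U \ S) := by
  unfold tau
  by_cases h1 : U = S
  · left; simp [h1]
  · rw [if_neg h1]
    rcases h with h | h
    · right; left; exact ⟨Finset.ssubset_iff_subset_ne.2 ⟨h, h1⟩, if_pos h⟩
    · right; right
      have h2 : S ⊂ U := Finset.ssubset_iff_subset_ne.2 ⟨h, Ne.symm h1⟩
      exact ⟨h2, if_neg h2.2⟩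

lemma tau_comp {K S U W : Finset (Fin d)} (hU : U ⊆ S ∨ S ⊆ U) (hW : W ⊆ S ∨ S ⊆ W)
    (hUK : U ⊆ K) (hWK : W ⊆ K)
    (h : U ⊆ W ∨ W ⊆ U) : tau K S U ⊆ tau K S W ∨ tau K S W ⊆ tau K S U := by
  rcases tau_cases (K := K) hU with ⟨a, e⟩ | ⟨a, e⟩ | ⟨a, e⟩ <;>
  rcases tau_cases (K := K) hW with ⟨b, f⟩ | ⟨b, f⟩ | ⟨b, f⟩ <;> rw [e, f]
  · exact Or.inl (Finset.Subset.refl _)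
  · exact Or.inl Finset.subset_union_right
  · exact Or.inr (Finset.sdiff_subset_sdiff hWK (Finset.Subset.refl _))
  · exact Or.inr Finset.subset_union_right
  · exact h.imp (fun h => Finset.union_subset_union_left h) (fun h => Finset.union_subset_union_left h)
  · exact Or.inr ((Finset.sdiff_subset_sdiff hWK (Finset.Subset.refl _)).trans
      Finset.subset_union_right)
  · exact Or.inl (Finset.sdiff_subset_sdiff hUK (Finset.Subset.refl _))
  · exact Or.inl ((Finset.sdiff_subset_sdiff hUK (Finset.Subset.refl _)).trans
      Finset.subset_union_right)
  · exact h.imp (fun h => Finset.sdiff_subset_sdiff h (Finset.Subset.refl _))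
      (fun h => Finset.sdiff_subset_sdiff h (Finset.Subset.refl _))

lemma tau_props {K S U : Finset (Fin d)} (hSK : S ⊆ K) (hS : S ≠ ∅) (hS' : S ≠ K)
    (hU : U ⊆ S ∨ S ⊆ U) (hUK : U ⊆ K) (hU0 : U ≠ ∅) (hU1 : U ≠ K) :
    tau K S U ⊆ K ∧ tau K S U ≠ ∅ ∧ tau K S U ≠ K ∧
    (tau K S U ⊆ K \ S ∨ K \ S ⊆ tau K S U) ∧ tau K (K \ S) (tau K S U) = U := by
  obtain ⟨q, hqK, hqS⟩ : ∃ q ∈ K, q ∉ S := by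
    by_contra hn; push Not at hn
    exact hS' (Finset.Subset.antisymm hSK hn)
  obtain ⟨s, hs⟩ := Finset.nonempty_iff_ne_empty.2 hS
  have hSS : K \ (K \ S) = S := Finset.sdiff_sdiff_eq_self hSK
  have hb : tau K S U ⊆ K ∧ tau K S U ≠ ∅ ∧ tau K S U ≠ K ∧
      (tau K S U ⊆ K \ S ∨ K \ S ⊆ tau K S U) := by
    rcases tau_cases (K := K) hU with ⟨a, e⟩ | ⟨a, e⟩ | ⟨a, e⟩ <;> rw [e]
    · refine ⟨Finset.sdiff_subset, ?_, ?_, Or.inl (Finset.Subset.refl _)⟩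
      · exact Finset.nonempty_iff_ne_empty.1 ⟨q, by simp [hqK, hqS]⟩
      · intro h
        have := h.symm ▸ hSK hs
        exact (Finset.mem_sdiff.1 this).2 hs
    · refine ⟨Finset.union_subset hUK Finset.sdiff_subset, ?_, ?_, Or.inr Finset.subset_union_right⟩
      · exact Finset.nonempty_iff_ne_empty.1 ⟨q, by simp [hqK, hqS]⟩
      · obtain ⟨x, hx, hxU⟩ := Finset.exists_of_ssubset a
        intro h
        have := h.symm ▸ hSK hx
        simp [hxU, hx] at this
    · refine ⟨Finset.sdiff_subset.trans hUK, ?_, ?_,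
        Or.inl (Finset.sdiff_subset_sdiff hUK (Finset.Subset.refl _))⟩
      · obtain ⟨x, hx, hxU⟩ := Finset.exists_of_ssubset a
        exact Finset.nonempty_iff_ne_empty.1 ⟨x, by simp [hx, hxU]⟩
      · intro h
        have := h.symm ▸ hSK hs
        exact (Finset.mem_sdiff.1 this).2 hs
  refine ⟨hb.1, hb.2.1, hb.2.2.1, hb.2.2.2, ?_⟩
  rcases tau_cases (K := K) hU with ⟨a, e⟩ | ⟨a, e⟩ | ⟨a, e⟩
  · rw [e, tau, if_pos rfl, hSS, a]
  · rw [e, tau, if_neg, if_neg]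
    · ext x
      simp only [Finset.mem_sdiff, Finset.mem_union]
      have : x ∈ U → x ∈ S := fun h => a.1 h
      tauto
    · intro h
      obtain ⟨x, hx⟩ := Finset.nonempty_iff_ne_empty.2 hU0
      exact (Finset.mem_sdiff.1 (h (Finset.mem_union_left _ hx))).2 (a.1 hx)
    · intro h
      obtain ⟨x, hx⟩ := Finset.nonempty_iff_ne_empty.2 hU0
      exact (Finset.mem_sdiff.1 (h ▸ (Finset.mem_union_left _ hx))).2 (a.1 hx)
  · rw [e, tau, if_neg, if_pos, hSS, Finset.sdiff_union_of_subset a.1]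
    · exact Finset.sdiff_subset_sdiff hUK (Finset.Subset.refl _)
    · intro h
      apply hU1
      apply Finset.Subset.antisymm hUK
      intro x hx
      by_cases hxS : x ∈ S
      · exact a.1 hxS
      · have : x ∈ K \ S := by simp [hx, hxS]
        rw [← h] at this
        exact (Finset.mem_sdiff.1 this).1

lemma tau_ex {K S : Finset (Fin d)} {c : Finset (Finset (Fin d))} (hc : Flag K c) (hS : S ∈ c)
    {U : Finset (Fin d)} (hU : U ∈ ex K c) : tau K S U ∈ ex K (c.image (tau K S)) := by
  obtain ⟨h1, h2, h3, h4, h5⟩ := mem_ex.1 hU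
  have hp := tau_props (hc.sub S hS) (hc.ne S hS) (hc.neK S hS) (h5 S hS) h1 h2 h3
  rw [mem_ex]
  refine ⟨hp.1, hp.2.1, hp.2.2.1, ?_, ?_⟩
  · intro h
    obtain ⟨W, hW, e⟩ := Finset.mem_image.1 h
    have hpW := tau_props (hc.sub S hS) (hc.ne S hS) (hc.neK S hS) (hc.chain W hW S hS)
      (hc.sub W hW) (hc.ne W hW) (hc.neK W hW)
    have := hpW.2.2.2.2
    rw [e, hp.2.2.2.2] at this
    exact h4 (this ▸ hW)
  · intro W hW
    obtain ⟨W, hW', rfl⟩ := Finset.mem_image.1 hW; replace hW := hW'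
    exact tau_comp (h5 S hS) (hc.chain W hW S hS) h1 (hc.sub W hW) (h5 W hW)

lemma tau_flag {K S : Finset (Fin d)} {c : Finset (Finset (Fin d))} (hc : Flag K c) (hS : S ∈ c) :
    Flag K (c.image (tau K S)) := by
  have hp : ∀ W ∈ c, _ := fun W hW => tau_props (hc.sub S hS) (hc.ne S hS) (hc.neK S hS)
    (hc.chain W hW S hS) (hc.sub W hW) (hc.ne W hW) (hc.neK W hW)
  refine ⟨?_, ?_, ?_, ?_⟩
  · intro U hU W hW
    obtain ⟨U, hU', rfl⟩ := Finset.mem_image.1 hU; replace hU := hU'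
    obtain ⟨W, hW', rfl⟩ := Finset.mem_image.1 hW; replace hW := hW'
    exact tau_comp (hc.chain U hU S hS) (hc.chain W hW S hS) (hc.sub U hU) (hc.sub W hW)
      (hc.chain U hU W hW)
  all_goals
    intro U hU
    obtain ⟨U, hU', rfl⟩ := Finset.mem_image.1 hU; replace hU := hU'
  · exact (hp U hU).1
  · exact (hp U hU).2.1
  · exact (hp U hU).2.2.1

lemma tau_image {K S : Finset (Fin d)} {c : Finset (Finset (Fin d))} (hc : Flag K c) (hS : S ∈ c) :
    (c.image (tau K S)).image (tau K (K \ S)) = c := by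
  rw [Finset.image_image]
  have : ∀ W ∈ c, (tau K (K \ S) ∘ tau K S) W = W := fun W hW =>
    (tau_props (hc.sub S hS) (hc.ne S hS) (hc.neK S hS)
    (hc.chain W hW S hS) (hc.sub W hW) (hc.ne W hW) (hc.neK W hW)).2.2.2.2
  rw [Finset.image_congr (g := id) (fun W hW => this W hW), Finset.image_id]

lemma tau_self (K S : Finset (Fin d)) : tau K S S = K \ S := by simp [tau]

lemma rfc_tau {K S : Finset (Fin d)} {c : Finset (Finset (Fin d))} (hc : Flag K c) (hS : S ∈ c)
    {D : Ty n d} (hD : Spl K D S) (hDK : ∀ i, D i ⊆ K) : rfc (c.image (tau K S)) D = rfc c D := by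
  funext i; ext k
  rw [mem_rfc, mem_rfc]
  refine and_congr_right fun hk => ?_
  rw [Finset.forall_mem_image]
  refine forall₂_congr fun U hU => ?_
  rcases tau_cases (K := K) (hc.chain U hU S hS) with ⟨a, e⟩ | ⟨a, e⟩ | ⟨a, e⟩ <;> rw [e] <;>
  rcases hD.2 i with h | h
  · subst a
    refine iff_of_true ?_ (fun _ => h hk)
    rintro ⟨x, hx⟩
    simp only [Finset.mem_inter, Finset.mem_sdiff] at hx
    exact absurd (h hx.1) hx.2.2
  · subst a
    refine iff_of_true (fun _ => ?_) ?_
    · exact Finset.mem_sdiff.2 ⟨hDK i hk, Finset.disjoint_left.1 h hk⟩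
    · rintro ⟨x, hx⟩
      rw [Finset.mem_inter] at hx
      exact absurd hx.2 (Finset.disjoint_left.1 h hx.1)
  · have e1 : ∀ x ∈ D i, (x ∈ U ∪ (K \ S) ↔ x ∈ U) := by
      intro x hx
      simp [h hx]
    rw [e1 k hk]
    have : D i ∩ (U ∪ (K \ S)) = D i ∩ U := by
      ext x; simp only [Finset.mem_inter]; exact and_congr_right (e1 x)
    rw [this]
  · refine iff_of_true (fun _ => ?_) ?_
    · exact Finset.mem_union_right _ (Finset.mem_sdiff.2 ⟨hDK i hk, Finset.disjoint_left.1 h hk⟩)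
    · rintro ⟨x, hx⟩
      rw [Finset.mem_inter] at hx
      exact absurd (a.1 hx.2) (Finset.disjoint_left.1 h hx.1)
  · refine iff_of_true ?_ (fun _ => a.1 (h hk))
    rintro ⟨x, hx⟩
    simp only [Finset.mem_inter, Finset.mem_sdiff] at hx
    exact absurd (h hx.1) hx.2.2
  · have e1 : ∀ x ∈ D i, (x ∈ U \ S ↔ x ∈ U) := by
      intro x hx
      simp [Finset.disjoint_left.1 h hx]
    rw [e1 k hk]
    have : D i ∩ (U \ S) = D i ∩ U := by
      ext x; simp only [Finset.mem_inter]; exact and_congr_right (e1 x)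
    rw [this]

lemma Om_swap (K : Finset (Fin d)) (pt : Ty n d → X) (D : Ty n d) (S : Finset (Fin d))
    (hD : Spl K D S) (hDK : ∀ i, D i ⊆ K) (r : ℕ) :
    ∀ c, Flag K c → S ∈ c → Om K pt D r c = Om K pt D r (c.image (tau K S)) := by
  induction r with
  | zero => intro c hc hS; rw [Om, Om, rfc_tau hc hS hD hDK]
  | succ r ih =>
    intro c hc hS
    rw [Om, Om, rfc_tau hc hS hD hDK]
    congr 1
    have hfl := tau_flag hc hS
    have hQ : K \ S ∈ c.image (tau K S) :=
      Finset.mem_image.2 ⟨S, hS, tau_self K S⟩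
    refine Finset.sum_bij' (fun U _ => tau K S U) (fun U _ => tau K (K \ S) U)
      (fun U hU => tau_ex hc hS hU) (fun U hU => ?_) (fun U hU => ?_) (fun U hU => ?_)
      (fun U hU => ?_)
    · have := tau_ex hfl hQ hU
      rwa [tau_image hc hS] at this
    · obtain ⟨h1, h2, h3, h4, h5⟩ := mem_ex.1 hU
      exact (tau_props (hc.sub S hS) (hc.ne S hS) (hc.neK S hS) (h5 S hS) h1 h2 h3).2.2.2.2
    · obtain ⟨h1, h2, h3, h4, h5⟩ := mem_ex.1 hU
      have := (tau_props (hfl.sub _ hQ) (hfl.ne _ hQ) (hfl.neK _ hQ) (h5 _ hQ) h1 h2 h3).2.2.2.2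
      rwa [Finset.sdiff_sdiff_eq_self (hc.sub S hS)] at this
    · rw [ih _ (hc.insert hU) (Finset.mem_insert_of_mem hS), Finset.image_insert]

lemma Om_erase (K : Finset (Fin d)) (pt : Ty n d → X) (D : Ty n d) (k : Fin d) (hk : k ∈ K)
    (hne : K.erase k ≠ ∅) (hD : ∀ i, D i ⊆ K.erase k) (r : ℕ) :
    ∀ c, (∀ W ∈ c, W ⊆ K.erase k) →
      Om K pt D r (insert (K.erase k) c) = Om (K.erase k) pt D r c := by
  have hr : ∀ c : Finset (Finset (Fin d)), rfc (insert (K.erase k) c) D = rfc c D := by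
    intro c
    funext i; ext x
    simp only [mem_rfc, Finset.mem_insert, forall_eq_or_imp]
    exact ⟨fun h => ⟨h.1, h.2.2⟩, fun h => ⟨h.1, fun _ => hD i h.1, h.2⟩⟩
  have hx : ∀ c : Finset (Finset (Fin d)), (∀ W ∈ c, W ⊆ K.erase k) →
      ex K (insert (K.erase k) c) = ex (K.erase k) c := by
    intro c hc
    ext U
    simp only [mem_ex, Finset.mem_insert, not_or, forall_eq_or_imp]
    constructor
    · rintro ⟨h1, h2, h3, ⟨h4, h5⟩, h6, h7⟩
      refine ⟨?_, h2, h4, h5, h7⟩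
      rcases h6 with h6 | h6
      · exact h6
      · exfalso
        by_cases hkU : k ∈ U
        · apply h3
          apply Finset.Subset.antisymm h1
          rw [← Finset.insert_erase hk]
          exact Finset.insert_subset hkU h6
        · exact h4 (Finset.Subset.antisymm (Finset.subset_erase.2 ⟨h1, hkU⟩) h6)
    · rintro ⟨h1, h2, h3, h4, h5⟩
      refine ⟨h1.trans (Finset.erase_subset _ _), h2, ?_, ⟨h3, h4⟩, Or.inl h1, h5⟩
      rintro rfl
      exact (Finset.mem_erase.1 (h1 hk)).1 rfl
  induction r with
  | zero => intro c _; rw [Om, Om, hr]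
  | succ r ih =>
    intro c hc
    rw [Om, Om, hr, hx c hc]
    congr 1
    refine Finset.sum_congr rfl (fun U hU => ?_)
    rw [Finset.insert_comm, ih]
    intro W hW
    rcases Finset.mem_insert.1 hW with rfl | hW
    · exact (mem_ex.1 hU).1
    · exact hc W hW

def OmP (M : Set (Ty n d)) (pt : Ty n d → X) (V : Ty n d) (σ : Finset X) : Prop :=
  ∃ F : Finset (Ty n d), σ = F.image pt ∧ (∀ D ∈ F, ∀ E ∈ F, D ≤ E ∨ E ≤ D) ∧
    ∀ D ∈ F, D ∈ M ∧ D ≤ V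

lemma Om_sup {R : Finset (Fin n)} {K' : Finset (Fin d)} {M : Set (Ty n d)} (hM : T R K' M)
    (K : Finset (Fin d)) (pt : Ty n d → X) (V : Ty n d) (r : ℕ) :
    ∀ c, rfc c V ∈ M → Om K pt V r c ∈ Sup (OmP M pt (rfc c V)) := by
  induction r with
  | zero =>
    intro c hc
    rw [Om]
    refine sup_single ⟨{rfc c V}, by simp, by simp, by simp [hc]⟩
  | succ r ih =>
    intro c hc
    rw [Om]
    refine sup_cone (P := fun σ => OmP M pt (rfc c V) σ) ?_ ?_
    · rintro σ ⟨F, rfl, hF, hF2⟩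
      refine ⟨insert (rfc c V) F, ?_, ?_, ?_⟩
      · rw [Finset.image_insert]
      · intro D hD E hE
        rw [Finset.mem_insert] at hD hE
        rcases hD with rfl | hD <;> rcases hE with rfl | hE
        · exact Or.inl le_rfl
        · exact Or.inr (hF2 E hE).2
        · exact Or.inl (hF2 D hD).2
        · exact hF D hD E hE
      · intro D hD
        rw [Finset.mem_insert] at hD
        rcases hD with rfl | hD
        · exact ⟨hc, le_rfl⟩
        · exact hF2 D hD
    · refine Submodule.sum_mem _ (fun U hU => ?_)
      have e := rfc_insert (mem_ex.1 hU).2.2.2.2 V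
      have hm : rfc (insert U c) V ∈ M := by
        rw [e, rfc_single]; exact hM.ref _ hc _
      refine sup_mono ?_ (ih (insert U c) hm)
      rintro σ ⟨F, h1, h2, h3⟩
      exact ⟨F, h1, h2, fun D hD => ⟨(h3 D hD).1,
        (h3 D hD).2.trans (rfc_anti (Finset.subset_insert _ _) V)⟩⟩

end

end
end TOMD

namespace TOMD
noncomputable section
open scoped Classical

variable {n d : ℕ}

def Conn (K : Finset (Fin d)) (V : Ty n d) : Prop := ∀ Z, Spl K V Z → Z = ∅ ∨ Z = K

structure Two (K : Finset (Fin d)) (D : Ty n d) (S : Finset (Fin d)) : Prop where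
  sub : S ⊆ K
  ne : S ≠ ∅
  neK : S ≠ K
  spl : Spl K D S
  only : ∀ Z, Spl K D Z → Z = ∅ ∨ Z = S ∨ Z = K \ S ∨ Z = K

lemma mem_im {α β : Type*} {inst : DecidableEq β} {f : α → β} {s : Finset α} {b : β}
    (h : b ∈ @Finset.image α β inst f s) : ∃ a ∈ s, f a = b :=
  Finset.mem_image.1 h

lemma spl_compl {K : Finset (Fin d)} {D : Ty n d} {Z : Finset (Fin d)} (hD : ∀ i, D i ⊆ K)
    (h : Spl K D Z) : Spl K D (K \ Z) := by
  refine ⟨Finset.sdiff_subset, fun i => ?_⟩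
  rcases h.2 i with h | h
  · right
    exact Finset.disjoint_of_subset_left h Finset.disjoint_sdiff
  · left; intro x hx
    exact Finset.mem_sdiff.2 ⟨hD i hx, Finset.disjoint_left.1 h hx⟩

lemma Two.compl {K : Finset (Fin d)} {D : Ty n d} {S : Finset (Fin d)} (hD : ∀ i, D i ⊆ K)
    (h : Two K D S) : Two K D (K \ S) := by
  refine ⟨Finset.sdiff_subset, ?_, ?_, spl_compl hD h.spl, ?_⟩
  · intro e; exact h.neK (Finset.Subset.antisymm h.sub (Finset.sdiff_eq_empty_iff_subset.1 e))
  · intro e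
    obtain ⟨x, hx⟩ := Finset.nonempty_iff_ne_empty.2 h.ne
    exact (Finset.mem_sdiff.1 (e.symm ▸ h.sub hx)).2 hx
  · intro Z hZ
    rw [Finset.sdiff_sdiff_eq_self h.sub]
    rcases h.only Z hZ with h | h | h | h <;> simp [h]

section
variable {X : Type*}

lemma Om_two {K : Finset (Fin d)} (pt : Ty n d → X) {V : Ty n d} (hV : ∀ i, V i ⊆ K)
    {S : Finset (Fin d)} (hS : S ∈ ex K ∅) (hT : ¬ Two K (rfc {S} V) S) :
    Om K pt V (K.card - 2) {S} = 0 := by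
  obtain ⟨h1, h2, h3, -, -⟩ := mem_ex.1 hS
  have hsp : Spl K (rfc {S} V) S := spl_rfc h1
  have hD : ∀ i, rfc {S} V i ⊆ K := fun i => Finset.Subset.trans (rfc_le _ _ i) (hV i)
  have hex : ∃ Z, Spl K (rfc {S} V) Z ∧ ¬ (Z = ∅ ∨ Z = S ∨ Z = K \ S ∨ Z = K) := by
    by_contra hn
    push Not at hn
    exact hT ⟨h1, h2, h3, hsp, fun Z hZ => hn Z hZ⟩
  obtain ⟨Z, hZ, hZn⟩ := hex
  simp only [not_or] at hZn
  obtain ⟨z1, z2, z3, z4⟩ := hZn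
  have hQne : K \ S ≠ ∅ := by
    intro e; exact h3 (Finset.Subset.antisymm h1 (Finset.sdiff_eq_empty_iff_subset.1 e))
  have hQS : K \ S ≠ S := by
    intro e
    obtain ⟨x, hx⟩ := Finset.nonempty_iff_ne_empty.2 h2
    exact (Finset.mem_sdiff.1 (e.symm ▸ hx)).2 hx
  have hQK : K \ S ≠ K := by
    intro e
    obtain ⟨x, hx⟩ := Finset.nonempty_iff_ne_empty.2 h2
    exact (Finset.mem_sdiff.1 (e.symm ▸ h1 hx)).2 hx
  have hK : K ≠ ∅ := by rintro rfl; exact h2 (Finset.subset_empty.1 h1)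
  have hsub : ({∅, S, K \ S, K, Z} : Finset (Finset (Fin d))) ⊆ spl K (rfc {S} V) := by
    intro Y hY
    simp only [Finset.mem_insert, Finset.mem_singleton] at hY
    rw [mem_spl]
    rcases hY with rfl | rfl | rfl | rfl | rfl
    · exact ⟨by simp, fun i => Or.inr (by simp)⟩
    · exact hsp
    · exact spl_compl hD hsp
    · exact ⟨by simp, fun i => Or.inl (hD i)⟩
    · exact hZ
  have hc5 : ({∅, S, K \ S, K, Z} : Finset (Finset (Fin d))).card = 5 := by
    rw [Finset.card_insert_of_notMem, Finset.card_insert_of_notMem,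
      Finset.card_insert_of_notMem, Finset.card_insert_of_notMem, Finset.card_singleton]
    · simpa using Ne.symm z4
    · simp only [Finset.mem_insert, Finset.mem_singleton, not_or]
      exact ⟨hQK, Ne.symm z3⟩
    · simp only [Finset.mem_insert, Finset.mem_singleton, not_or]
      exact ⟨hQS.symm, h3, Ne.symm z2⟩
    · simp only [Finset.mem_insert, Finset.mem_singleton, not_or]
      exact ⟨h2.symm, hQne.symm, hK.symm, Ne.symm z1⟩
  have h5 : 5 ≤ (spl K (rfc {S} V)).card := hc5 ▸ Finset.card_le_card hsub
  have hK2 : 2 ≤ K.card := by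
    have a := Finset.card_pos.2 (Finset.nonempty_iff_ne_empty.2 h2)
    have b := Finset.card_lt_card (Finset.ssubset_iff_subset_ne.2 ⟨h1, h3⟩)
    omega
  apply Om_vanish
  calc 2 ^ K.card = 4 * 2 ^ (K.card - 2) := by
        rw [show K.card = (K.card - 2) + 2 from by omega, pow_add]; simp; ring
    _ < 5 * 2 ^ (K.card - 2) := by
        have : 0 < 2 ^ (K.card - 2) := by positivity
        omega
    _ ≤ _ := Nat.mul_le_mul_right _ h5

def verts (M : Set (Ty n d)) (K : Finset (Fin d)) : Finset (Ty n d) :=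
  Finset.univ.filter (fun V => V ∈ M ∧ (∀ i, V i ⊆ K) ∧ Conn K V)

lemma mem_verts {M : Set (Ty n d)} {K : Finset (Fin d)} {V : Ty n d} :
    V ∈ verts M K ↔ V ∈ M ∧ (∀ i, V i ⊆ K) ∧ Conn K V := by simp [verts]

lemma conn_meet {K : Finset (Fin d)} {V : Ty n d} (h : Conn K V) {S : Finset (Fin d)}
    (hV : ∀ i, V i ⊆ K)
    (h1 : S ⊆ K) (h2 : S ≠ ∅) (h3 : S ≠ K) :
    ∃ i, ∃ s ∈ V i, s ∈ S ∧ ∃ q ∈ V i, q ∈ K \ S := by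
  by_contra hn
  push Not at hn
  have : Spl K V S := by
    refine ⟨h1, fun i => ?_⟩
    by_contra hc
    push Not at hc
    rw [Finset.not_disjoint_iff] at hc
    obtain ⟨hc, s, hs, hsS⟩ := hc
    obtain ⟨q, hq, hqS⟩ := Finset.not_subset.1 hc
    exact hn i s hs hsS q hq (Finset.mem_sdiff.2 ⟨hV i hq, hqS⟩)
  rcases h S this with h | h
  · exact h2 h
  · exact h3 h

lemma uniq {R : Finset (Fin n)} {K0 K : Finset (Fin d)} {M : Set (Ty n d)} (hM : T R K0 M)
    {V V' : Ty n d} (hV : V ∈ verts M K) (hV' : V' ∈ verts M K) {S : Finset (Fin d)}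
    (he : rfc {S} V = rfc {S} V') (hT : Two K (rfc {S} V) S) : V = V' := by
  obtain ⟨a1, a2, a3⟩ := mem_verts.1 hV
  obtain ⟨b1, b2, b3⟩ := mem_verts.1 hV'
  obtain ⟨ξ, μ, h1, h2⟩ := hM.sep V a1 V' b1
  have hDμ : ∀ i, ∀ k ∈ rfc {S} V i, ξ k = μ i := by
    intro i k hk
    exact le_antisymm (h2 i k (rfc_le _ _ i (he ▸ hk))).1 (h1 i k (rfc_le _ _ i hk)).1
  have hlev : ∀ v, Spl K (rfc {S} V) (K.filter (fun k => ξ k = v)) := by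
    intro v
    refine ⟨Finset.filter_subset _ _, fun i => ?_⟩
    by_cases hv : μ i = v
    · left; intro k hk
      rw [Finset.mem_filter]
      exact ⟨a2 i (rfc_le _ _ i hk), (hDμ i k hk).trans hv⟩
    · right; rw [Finset.disjoint_left]; intro k hk hk2
      rw [Finset.mem_filter] at hk2
      exact hv ((hDμ i k hk).symm.trans hk2.2)
  have hconst : ∀ Y, (Y = S ∨ Y = K \ S) → ∀ x ∈ Y, ∀ y ∈ Y, ξ y = ξ x := by
    intro Y hY x hx y hy
    have hYK : Y ⊆ K := by
      rcases hY with rfl | rfl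
      · exact hT.sub
      · exact Finset.sdiff_subset
    have hxm : x ∈ K.filter (fun k => ξ k = ξ x) := Finset.mem_filter.2 ⟨hYK hx, rfl⟩
    have key : y ∈ K.filter (fun k => ξ k = ξ x) := by
      rcases hT.only _ (hlev (ξ x)) with h | h | h | h
      · rw [h] at hxm; simp at hxm
      · rw [h] at hxm ⊢
        rcases hY with rfl | rfl
        · exact hy
        · exact absurd hxm (Finset.mem_sdiff.1 hx).2
      · rw [h] at hxm ⊢
        rcases hY with rfl | rfl
        · exact absurd hx (Finset.mem_sdiff.1 hxm).2
        · exact hy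
      · rw [h]; exact hYK hy
    exact (Finset.mem_filter.1 key).2
  obtain ⟨i, s, hs, hsS, q, hq, hqQ⟩ := conn_meet a3 a2 hT.sub hT.ne hT.neK
  obtain ⟨i', s', hs', hsS', q', hq', hqQ'⟩ := conn_meet b3 b2 hT.sub hT.ne hT.neK
  have hsD : s ∈ rfc {S} V i := mem_rfc.2 ⟨hs, by simp [hsS]⟩
  have hsD' : s' ∈ rfc {S} V i' := he ▸ mem_rfc.2 ⟨hs', by simp [hsS']⟩
  have e1 : ξ s ≤ ξ q := (hDμ i s hsD).le.trans (h1 i q hq).1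
  have e2 : ξ q' ≤ ξ s' := (h2 i' q' hq').1.trans (hDμ i' s' hsD').ge
  have e3 := hconst S (Or.inl rfl) s hsS s' hsS'
  have e4 := hconst _ (Or.inr rfl) q hqQ q' hqQ'
  have e5 : ξ s = ξ q := by omega
  have hall : ∀ k ∈ K, ξ k = ξ s := by
    intro k hk
    by_cases hkS : k ∈ S
    · exact hconst S (Or.inl rfl) s hsS k hkS
    · rw [e5]; exact hconst _ (Or.inr rfl) q hqQ k (Finset.mem_sdiff.2 ⟨hk, hkS⟩)
  funext i
  by_cases hi : i ∈ R
  · have hne : (rfc {S} V i).Nonempty := by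
      rw [rfc_single]; exact rf_nonempty _ (hM.ne V a1 i hi)
    obtain ⟨k, hk⟩ := hne
    have hμ : μ i = ξ s := (hDμ i k hk).symm.trans (hall k (a2 i (rfc_le _ _ i hk)))
    ext x
    constructor
    · intro hx; exact (h1 i x hx).2 (hμ.trans (hall x (a2 i hx)).symm)
    · intro hx; exact (h2 i x hx).2 ((hall x (b2 i hx)).trans hμ.symm)
  · rw [hM.off V a1 i hi, hM.off V' b1 i hi]

def Used (D : Ty n d) (S : Finset (Fin d)) : Prop := ∃ i, (D i ∩ S).Nonempty

lemma exist {R : Finset (Fin n)} {K0 K : Finset (Fin d)} {M : Set (Ty n d)} (hM : T R K0 M)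
    (hmax : ∀ (R' : Finset (Fin n)) (Q : Finset (Fin d)), Q.Nonempty → Q ⊂ K0 → MaxP R' Q)
    (hK : K ⊆ K0) {D : Ty n d} (hD : D ∈ M) (hDK : ∀ i, D i ⊆ K) {S : Finset (Fin d)}
    (hT : Two K D S) (hu : Used D S) : ∃ V ∈ verts M K, rfc {S} V = D := by
  set Q := K \ S with hQ
  have hQne : Q.Nonempty := Finset.nonempty_iff_ne_empty.2 (hT.compl hDK).ne
  have hQK0 : Q ⊂ K0 := by
    refine ⟨Finset.sdiff_subset.trans hK, fun h => ?_⟩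
    obtain ⟨x, hx⟩ := Finset.nonempty_iff_ne_empty.2 hT.ne
    exact (Finset.mem_sdiff.1 (h (hK (hT.sub hx)))).2 hx
  set R' := R.filter (fun i => Disjoint (D i) S) with hR'
  have hR'R : R' ⊆ R := Finset.filter_subset _ _
  have hQD : ∀ i ∈ R', D i ⊆ Q := by
    intro i hi x hx
    exact Finset.mem_sdiff.2 ⟨hDK i hx, Finset.disjoint_left.1 (Finset.mem_filter.1 hi).2 hx⟩
  have hSD : ∀ i, i ∈ R → i ∉ R' → D i ⊆ S := by
    intro i hi hi'
    rcases hT.spl.2 i with h | h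
    · exact h
    · exact absurd (Finset.mem_filter.2 ⟨hi, h⟩) hi'
  obtain ⟨E, hE, hEQ, hEres⟩ : ∃ E ∈ M, (∀ i, E i ⊆ Q) ∧ res R' D = res R' E := by
    refine hmax R' Q hQne hQK0 _ (hM.restrict hR'R hQK0.1) (res R' D) ?_ ?_ ?_ ?_
    · intro i; simp only [res]; split_ifs with h
      · exact hQD i h
      · simp
    · intro i hi; simp only [res, if_pos hi]; exact hM.ne D hD i (hR'R hi)
    · intro i hi; simp only [res, if_neg hi]
    · rintro _ ⟨E, hE, hEQ, rfl⟩
      obtain ⟨ξ, μ, a1, a2⟩ := hM.sep D hD E hE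
      refine ⟨ξ, μ, fun i k hk => ?_, fun i k hk => ?_⟩ <;>
      · by_cases hi : i ∈ R'
        · simp only [res, if_pos hi] at hk ⊢
          first | exact a1 i k hk | exact a2 i k hk
        · simp [res, hi] at hk
  have hEeq : ∀ i ∈ R', E i = D i := by
    intro i hi
    have := congrFun hEres i
    simp only [res, if_pos hi] at this
    exact this.symm
  -- invariant
  let Inv : Ty n d → Prop := fun W => W ∈ M ∧ (∀ i ∈ R', W i = D i) ∧
    (∀ i ∈ R \ R', W i ⊆ Q ∨ (D i ⊆ W i ∧ W i ⊆ D i ∪ Q)) ∧ (∃ i ∈ R \ R', ∃ q ∈ W i, q ∈ Q)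
  let lost : Ty n d → Finset (Fin n) := fun W => (R \ R').filter (fun i => W i ⊆ Q)
  have hmain : ∀ m, ∀ W, Inv W → (lost W).card ≤ m → ∃ V, Inv V ∧ lost V = ∅ := by
    intro m
    induction m with
    | zero => intro W hW hc; exact ⟨W, hW, Finset.card_eq_zero.1 (Nat.le_zero.1 hc)⟩
    | succ m ih =>
      intro W hW hc
      by_cases hl : lost W = ∅
      · exact ⟨W, hW, hl⟩
      obtain ⟨j, hj⟩ := Finset.nonempty_iff_ne_empty.2 hl
      obtain ⟨hjR, hjQ⟩ := Finset.mem_filter.1 hj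
      rw [Finset.mem_sdiff] at hjR
      obtain ⟨w1, w2, w3, w4⟩ := hW
      obtain ⟨C, hC, c1, c2⟩ := hM.elim D hD W w1 j hjR.1
      have hdis : ∀ i, i ∈ R → i ∉ R' → ∃ x ∈ D i, x ∉ Q := by
        intro i hi hi'
        obtain ⟨x, hx⟩ := hM.ne D hD i hi
        exact ⟨x, hx, fun h => (Finset.mem_sdiff.1 h).2 (hSD i hi hi' hx)⟩
      refine ih C ⟨hC, ?_, ?_, ?_⟩ ?_
      · intro i hi
        rcases c2 i with h | h | h <;> rw [h]
        · exact w2 i hi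
        · rw [w2 i hi, Finset.union_self]
      · intro i hi
        rcases c2 i with h | h | h <;> rw [h]
        · exact Or.inr ⟨Finset.Subset.refl _, Finset.subset_union_left⟩
        · exact w3 i hi
        · right
          refine ⟨Finset.subset_union_left, Finset.union_subset Finset.subset_union_left ?_⟩
          rcases w3 i hi with h1 | h1
          · exact h1.trans Finset.subset_union_right
          · exact h1.2
      · obtain ⟨q, hq⟩ := hM.ne W w1 j hjR.1
        exact ⟨j, Finset.mem_sdiff.2 hjR, q, by rw [c1]; exact Finset.mem_union_right _ hq, hjQ hq⟩
      · have hsub : lost C ⊂ lost W := by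
          refine ⟨fun i hi => ?_, fun h => ?_⟩
          · obtain ⟨i1, i2⟩ := Finset.mem_filter.1 hi
            refine Finset.mem_filter.2 ⟨i1, ?_⟩
            obtain ⟨x, hx, hxQ⟩ := hdis i (Finset.mem_sdiff.1 i1).1 (Finset.mem_sdiff.1 i1).2
            rcases c2 i with h | h | h <;> rw [h] at i2
            · exact absurd (i2 hx) hxQ
            · exact i2
            · exact absurd (i2 (Finset.mem_union_left _ hx)) hxQ
          · have := (Finset.mem_filter.1 (h hj)).2
            rw [c1] at this
            obtain ⟨x, hx, hxQ⟩ := hdis j hjR.1 hjR.2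
            exact hxQ (this (Finset.mem_union_left _ hx))
        have := Finset.card_lt_card hsub
        omega
  have hInvE : Inv E := by
    refine ⟨hE, hEeq, fun i _ => Or.inl (hEQ i), ?_⟩
    obtain ⟨i, x, hx⟩ := hu
    rw [Finset.mem_inter] at hx
    have hi : i ∈ R := by
      by_contra hi
      rw [hM.off D hD i hi] at hx
      simp at hx
    obtain ⟨q, hq⟩ := hM.ne E hE i hi
    refine ⟨i, Finset.mem_sdiff.2 ⟨hi, fun h => ?_⟩, q, hq, hEQ i hq⟩
    exact Finset.disjoint_left.1 (Finset.mem_filter.1 h).2 hx.1 hx.2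
  obtain ⟨V, ⟨v1, v2, v3, v4⟩, hl⟩ := hmain _ E hInvE le_rfl
  have v5 : ∀ i ∈ R \ R', D i ⊆ V i ∧ V i ⊆ D i ∪ Q := by
    intro i hi
    refine (v3 i hi).resolve_left (fun h => ?_)
    have : i ∈ lost V := Finset.mem_filter.2 ⟨hi, h⟩
    rw [hl] at this; simp at this
  have hDV : D ≤ V := by
    intro i
    by_cases hi : i ∈ R
    · by_cases hi' : i ∈ R'
      · exact (v2 i hi').ge
      · exact (v5 i (Finset.mem_sdiff.2 ⟨hi, hi'⟩)).1
    · rw [hM.off D hD i hi]; simp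
  have hVD : ∀ i, V i ⊆ D i ∪ Q := by
    intro i
    by_cases hi : i ∈ R
    · by_cases hi' : i ∈ R'
      · rw [v2 i hi']; exact Finset.subset_union_left
      · exact (v5 i (Finset.mem_sdiff.2 ⟨hi, hi'⟩)).2
    · rw [hM.off V v1 i hi]; simp
  have href : rfc {S} V = D := by
    funext i; ext k
    rw [mem_rfc]
    simp only [Finset.mem_singleton, forall_eq]
    by_cases hi : i ∈ R
    · by_cases hi' : i ∈ R'
      · rw [v2 i hi']
        refine ⟨fun h => h.1, fun h => ⟨h, ?_⟩⟩
        rintro ⟨x, hx⟩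
        rw [Finset.mem_inter] at hx
        exact absurd hx.2 (Finset.disjoint_left.1 (Finset.mem_filter.1 hi').2 hx.1)
      · obtain ⟨x, hx⟩ := hM.ne D hD i hi
        constructor
        · rintro ⟨h1, h2⟩
          have hkS := h2 ⟨x, Finset.mem_inter.2 ⟨hDV i hx, hSD i hi hi' hx⟩⟩
          rcases Finset.mem_union.1 (hVD i h1) with h | h
          · exact h
          · exact absurd hkS (Finset.mem_sdiff.1 h).2
        · intro h
          exact ⟨hDV i h, fun _ => hSD i hi hi' h⟩
    · rw [hM.off V v1 i hi, hM.off D hD i hi]; simp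
  refine ⟨V, mem_verts.2 ⟨v1, fun i => (hVD i).trans
    (Finset.union_subset (hDK i) Finset.sdiff_subset), fun Z hZ => ?_⟩, href⟩
  obtain ⟨i, hi, q, hq, hqQ⟩ := v4
  obtain ⟨x, hx⟩ := hM.ne D hD i (Finset.mem_sdiff.1 hi).1
  have hxS := hSD i (Finset.mem_sdiff.1 hi).1 (Finset.mem_sdiff.1 hi).2 hx
  have hxV := hDV i hx
  have hqS := (Finset.mem_sdiff.1 hqQ).2
  rcases hT.only Z (hZ.mono hDV) with h | h | h | h
  · exact Or.inl h
  · exfalso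
    rw [h] at hZ
    rcases hZ.2 i with h2 | h2
    · exact hqS (h2 hq)
    · exact Finset.disjoint_left.1 h2 hxV hxS
  · exfalso
    rw [h] at hZ
    rcases hZ.2 i with h2 | h2
    · exact (Finset.mem_sdiff.1 (h2 hxV)).2 hxS
    · exact Finset.disjoint_left.1 h2 hq hqQ
  · exact Or.inr h

def ZZ (M : Set (Ty n d)) (pt : Ty n d → X) (K : Finset (Fin d)) : Ch X :=
  if K = ∅ then Finsupp.single ∅ 1 else ∑ V ∈ verts M K, Om K pt V (K.card - 1) ∅

def ZP (M : Set (Ty n d)) (pt : Ty n d → X) (K : Finset (Fin d)) (σ : Finset X) : Prop :=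
  ∃ F : Finset (Ty n d), σ = F.image pt ∧ (∀ D ∈ F, ∀ E ∈ F, D ≤ E ∨ E ≤ D) ∧
    (∀ D ∈ F, D ∈ M ∧ ∀ i, D i ⊆ K) ∧ (K ≠ ∅ → ∃ V ∈ verts M K, ∀ D ∈ F, D ≤ V) ∧
    (K = ∅ → F = ∅)

lemma ZZ_sup {R : Finset (Fin n)} {K0 : Finset (Fin d)} {M : Set (Ty n d)} (hM : T R K0 M)
    (pt : Ty n d → X) (K : Finset (Fin d)) : ZZ M pt K ∈ Sup (ZP M pt K) := by
  unfold ZZ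
  split_ifs with hK
  · exact sup_single ⟨∅, by simp, by simp, by simp, fun h => absurd hK h, fun _ => rfl⟩
  · refine Submodule.sum_mem _ (fun V hV => ?_)
    obtain ⟨a1, a2, a3⟩ := mem_verts.1 hV
    have := Om_sup hM K pt V (K.card - 1) ∅ (by rw [rfc_empty]; exact a1)
    refine sup_mono ?_ this
    rintro σ ⟨F, h1, h2, h3⟩
    rw [rfc_empty] at h3
    exact ⟨F, h1, h2, fun D hD => ⟨(h3 D hD).1, fun i => Finset.Subset.trans ((h3 D hD).2 i) (a2 i)⟩,
      fun _ => ⟨V, hV, fun D hD => (h3 D hD).2⟩, fun h => absurd h hK⟩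

lemma bd_ZZ {R : Finset (Fin n)} {K0 K : Finset (Fin d)} {M : Set (Ty n d)} (hM : T R K0 M)
    (hR : R.Nonempty)
    (hmax : ∀ (R' : Finset (Fin n)) (Q : Finset (Fin d)), Q.Nonempty → Q ⊂ K0 → MaxP R' Q)
    (pt : Ty n d → X) (hK : K ⊆ K0) (hne : K.Nonempty) :
    bd (ZZ M pt K) = ∑ k ∈ K, ZZ M pt (K.erase k) := by
  have hKe : K ≠ ∅ := Finset.nonempty_iff_ne_empty.1 hne
  rcases Nat.lt_or_ge K.card 2 with hc | hc
  · have hc1 : K.card = 1 := by have := Finset.card_pos.2 hne; omega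
    obtain ⟨k, rfl⟩ := Finset.card_eq_one.1 hc1
    have hv : verts M {k} = {fun i => if i ∈ R then ({k} : Finset (Fin d)) else ∅} := by
      ext V
      rw [mem_verts, Finset.mem_singleton]
      constructor
      · rintro ⟨h1, h2, -⟩
        funext i
        split_ifs with hi
        · exact (Finset.subset_singleton_iff.1 (h2 i)).resolve_left
            (Finset.nonempty_iff_ne_empty.1 (hM.ne V h1 i hi))
        · exact hM.off V h1 i hi
      · rintro rfl
        refine ⟨hM.bdry k (hK (by simp)), fun i => by beta_reduce; split_ifs <;> simp, fun Z hZ => ?_⟩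
        exact Finset.subset_singleton_iff.1 hZ.1
    rw [ZZ, if_neg hKe, hv, Finset.sum_singleton, Finset.sum_singleton, Finset.card_singleton]
    simp only [Nat.sub_self, Om]
    rw [bd_single]
    simp [ZZ]
  · rw [ZZ, if_neg hKe, map_sum]
    have e1 : ∀ V ∈ verts M K, bd (Om K pt V (K.card - 1) ∅)
        = ∑ S ∈ ex K ∅, Om K pt V (K.card - 2) {S} := by
      intro V _
      have := bd_Om K pt V (K.card - 2) ∅ (Flag.empty K) (by simp; omega)
      rw [show K.card - 1 = K.card - 2 + 1 from by omega, this]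
      rfl
    rw [Finset.sum_congr rfl e1, Finset.sum_comm]
    let DD : Finset (Fin d) → Finset (Ty n d) := fun S =>
      Finset.univ.filter (fun D => Two K D S ∧ ∃ V ∈ verts M K, rfc {S} V = D)
    have memDD : ∀ S D, D ∈ DD S ↔ Two K D S ∧ ∃ V ∈ verts M K, rfc {S} V = D := by
      intro S D; simp [DD]
    have e2 : ∀ S ∈ ex K ∅, ∑ V ∈ verts M K, Om K pt V (K.card - 2) {S}
        = ∑ D ∈ DD S, Om K pt D (K.card - 2) {S} := by
      intro S hS
      rw [← Finset.sum_filter_of_ne (p := fun V => Two K (rfc {S} V) S)]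
      · refine Finset.sum_bij (fun V _ => rfc {S} V) ?_ ?_ ?_ ?_
        · intro V hV
          rw [Finset.mem_filter] at hV
          exact (memDD _ _).2 ⟨hV.2, V, hV.1, rfl⟩
        · intro V hV V' hV' he
          rw [Finset.mem_filter] at hV hV'
          exact uniq hM hV.1 hV'.1 he hV.2
        · intro D hD
          obtain ⟨h1, V, hV, rfl⟩ := (memDD _ _).1 hD
          exact ⟨V, Finset.mem_filter.2 ⟨hV, h1⟩, rfl⟩
        · intro V hV
          apply Om_sub
          · have := (Flag.empty K).insert hS
            simpa using this
          · simp
      · intro V hV h0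
        by_contra hn
        exact h0 (Om_two pt (mem_verts.1 hV).2.1 hS hn)
    rw [Finset.sum_congr rfl e2, Finset.sum_sigma']
    rw [← Finset.sum_filter_add_sum_filter_not _ (fun p => Used p.2 (K \ p.1))]
    have memB : ∀ p : (Σ _ : Finset (Fin d), Ty n d), p ∈ (ex K ∅).sigma DD →
        Two K p.2 p.1 ∧ p.2 ∈ M ∧ (∀ i, p.2 i ⊆ K) ∧ Used p.2 p.1 := by
      rintro ⟨S, D⟩ hp
      rw [Finset.mem_sigma] at hp
      obtain ⟨h1, V, hV, h2⟩ := (memDD _ _).1 hp.2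
      obtain ⟨a1, a2, a3⟩ := mem_verts.1 hV
      dsimp only at h1 h2 ⊢
      refine ⟨h1, ?_, ?_, ?_⟩
      · rw [← h2, rfc_single]; exact hM.ref V a1 _
      · intro i; rw [← h2]; exact Finset.Subset.trans (rfc_le _ _ i) (a2 i)
      · obtain ⟨i, s, hs, hsS, -⟩ := conn_meet a3 a2 h1.sub h1.ne h1.neK
        refine ⟨i, s, Finset.mem_inter.2 ⟨?_, hsS⟩⟩
        rw [← h2, mem_rfc]; exact ⟨hs, by simp [hsS]⟩
    have memB' : ∀ S D, Two K D S → D ∈ M → (∀ i, D i ⊆ K) → Used D S →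
        (⟨S, D⟩ : (Σ _ : Finset (Fin d), Ty n d)) ∈ (ex K ∅).sigma DD := by
      intro S D h1 h2 h3 h4
      rw [Finset.mem_sigma]
      exact ⟨mem_ex.2 ⟨h1.sub, h1.ne, h1.neK, by simp, by simp⟩,
        (memDD _ _).2 ⟨h1, exist hM hmax hK h2 h3 h1 h4⟩⟩
    have z1 : ∑ p ∈ ((ex K ∅).sigma DD).filter (fun p => Used p.2 (K \ p.1)),
        Om K pt p.2 (K.card - 2) {p.1} = 0 := by
      refine Finset.sum_involution (fun p _ => ⟨K \ p.1, p.2⟩) ?_ ?_ ?_ ?_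
      · rintro ⟨S, D⟩ hp
        rw [Finset.mem_filter] at hp
        obtain ⟨h1, h2, h3, h4⟩ := memB _ hp.1
        dsimp only at h1 h2 h3 h4 ⊢
        have := Om_swap K pt D S h1.spl h3 (K.card - 2) {S}
          (by
            have := (Flag.empty K).insert (U := S)
              (mem_ex.2 ⟨h1.sub, h1.ne, h1.neK, by simp, by simp⟩)
            simpa using this) (by simp)
        rw [Finset.image_singleton, tau_self] at this
        rw [this]
        exact ch_add_self _
      · rintro ⟨S, D⟩ hp _ he
        rw [Finset.mem_filter] at hp
        obtain ⟨h1, -⟩ := memB _ hp.1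
        have he' : K \ S = S := congrArg Sigma.fst he
        obtain ⟨x, hx⟩ := Finset.nonempty_iff_ne_empty.2 h1.ne
        dsimp only at hx
        have hx' := hx
        rw [← he'] at hx'
        exact (Finset.mem_sdiff.1 hx').2 hx
      · rintro ⟨S, D⟩ hp
        rw [Finset.mem_filter] at hp ⊢
        obtain ⟨h1, h2, h3, h4⟩ := memB _ hp.1
        refine ⟨memB' _ _ (h1.compl h3) h2 h3 hp.2, ?_⟩
        dsimp only at h1 h4 ⊢
        rw [Finset.sdiff_sdiff_eq_self h1.sub]; exact h4
      · rintro ⟨S, D⟩ hp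
        rw [Finset.mem_filter] at hp
        obtain ⟨h1, h2, h3, h4⟩ := memB _ hp.1
        dsimp only at h1 ⊢
        rw [Finset.sdiff_sdiff_eq_self h1.sub]
    rw [z1, zero_add]
    have e3 : ∀ k ∈ K, K.erase k ≠ ∅ := by
      intro k hk h
      have := Finset.card_erase_of_mem hk
      rw [h, Finset.card_empty] at this
      omega
    have e4 : ∑ k ∈ K, ZZ M pt (K.erase k) = ∑ k ∈ K, ∑ D ∈ verts M (K.erase k),
        Om (K.erase k) pt D ((K.erase k).card - 1) ∅ :=
      Finset.sum_congr rfl (fun k hk => by rw [ZZ, if_neg (e3 k hk)])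
    rw [e4, Finset.sum_sigma']
    symm
    refine Finset.sum_bij (fun p _ => ⟨K.erase p.1, p.2⟩) ?_ ?_ ?_ ?_
    · rintro ⟨k, D⟩ hp
      rw [Finset.mem_sigma] at hp
      obtain ⟨hk, hD⟩ := hp
      dsimp only at hk hD ⊢
      obtain ⟨a1, a2, a3⟩ := mem_verts.1 hD
      have hKk : K \ K.erase k = {k} := by
        ext x; simp only [Finset.mem_sdiff, Finset.mem_erase, Finset.mem_singleton]
        constructor
        · rintro ⟨h1, h2⟩
          by_contra hx; exact h2 ⟨hx, h1⟩
        · rintro rfl; exact ⟨hk, fun h => h.1 rfl⟩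
      have hcov : ∀ Z ⊆ K, ∀ Y, Z.erase k = Y → Z = Y ∨ Z = insert k Y := by
        rintro Z _ Y rfl
        by_cases hkZ : k ∈ Z
        · right; rw [Finset.insert_erase hkZ]
        · left; rw [Finset.erase_eq_of_notMem hkZ]
      rw [Finset.mem_filter]
      refine ⟨memB' _ _ ⟨Finset.erase_subset _ _, e3 k hk, ?_, ?_, ?_⟩ a1
        (fun i => (a2 i).trans (Finset.erase_subset _ _)) ?_, ?_⟩
      · intro h; exact (Finset.mem_erase.1 (h.symm ▸ hk : k ∈ K.erase k)).1 rfl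
      · exact ⟨Finset.erase_subset _ _, fun i => Or.inl (a2 i)⟩
      · intro Z hZ
        have hZ' : Spl (K.erase k) D (Z.erase k) := by
          refine ⟨Finset.erase_subset_erase _ hZ.1, fun i => ?_⟩
          rcases hZ.2 i with h | h
          · left; intro x hx
            exact Finset.mem_erase.2 ⟨(Finset.mem_erase.1 (a2 i hx)).1, h hx⟩
          · right; exact Finset.disjoint_of_subset_right (Finset.erase_subset _ _) h
        rw [hKk]
        rcases a3 _ hZ' with h | h
        · rcases hcov Z hZ.1 _ h with h | h
          · exact Or.inl h
          · right; right; left; simpa using h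
        · rcases hcov Z hZ.1 _ h with h | h
          · exact Or.inr (Or.inl h)
          · right; right; right; rw [h, Finset.insert_erase hk]
      · obtain ⟨i, hi⟩ := hR
        obtain ⟨x, hx⟩ := hM.ne D a1 i hi
        exact ⟨i, x, Finset.mem_inter.2 ⟨hx, a2 i hx⟩⟩
      · dsimp only
        rw [hKk]
        rintro ⟨i, x, hx⟩
        rw [Finset.mem_inter, Finset.mem_singleton] at hx
        exact (Finset.mem_erase.1 (a2 i hx.1)).1 hx.2
    · rintro ⟨k, D⟩ hp ⟨k', D'⟩ hp' he
      rw [Finset.mem_sigma] at hp hp'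
      have h1 : K.erase k = K.erase k' := congrArg Sigma.fst he
      have h2 : D = D' := by
        have := (Sigma.mk.inj he).2
        exact eq_of_heq this
      have h3 : k = k' := Finset.erase_injOn K hp.1 hp'.1 h1
      subst h3; subst h2; rfl
    · rintro ⟨S, D⟩ hp
      rw [Finset.mem_filter] at hp
      obtain ⟨h1, h2, h3, h4⟩ := memB _ hp.1
      have h5 := hp.2
      dsimp only at h1 h2 h3 h4 h5
      have hDS : ∀ i, D i ⊆ S := by
        intro i x hx
        by_contra hxS
        exact h5 ⟨i, x, Finset.mem_inter.2 ⟨hx, Finset.mem_sdiff.2 ⟨h3 i hx, hxS⟩⟩⟩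
      obtain ⟨q, hq⟩ := Finset.nonempty_iff_ne_empty.2 (h1.compl h3).ne
      obtain ⟨hqK, hqS⟩ := Finset.mem_sdiff.1 hq
      have hSq : S = K.erase q := by
        have hs : Spl K D {q} := by
          refine ⟨by simpa using hqK, fun i => Or.inr ?_⟩
          rw [Finset.disjoint_singleton_right]
          exact fun h => hqS (hDS i h)
        have hQ : K \ S = {q} := by
          rcases h1.only _ hs with h | h | h | h
          · simp at h
          · exact absurd (h ▸ Finset.mem_singleton_self q) hqS
          · exact h.symm
          · rw [← h] at hc; simp at hc
        rw [← Finset.sdiff_sdiff_eq_self h1.sub, hQ, Finset.sdiff_singleton_eq_erase]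
      refine ⟨⟨q, D⟩, ?_, ?_⟩
      · rw [Finset.mem_sigma]
        refine ⟨hqK, mem_verts.2 ⟨h2, fun i => hSq ▸ hDS i, fun Z hZ => ?_⟩⟩
        dsimp only at hZ
        have hZ' : Spl K D Z := ⟨hZ.1.trans (Finset.erase_subset _ _), hZ.2⟩
        have hqZ : q ∉ Z := fun h => (Finset.mem_erase.1 (hZ.1 h)).1 rfl
        rcases h1.only Z hZ' with h | h | h | h
        · exact Or.inl h
        · exact Or.inr (h.trans hSq)
        · exact absurd (h ▸ hq) hqZ
        · exact absurd (h ▸ hqK) hqZ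
      · dsimp only; rw [hSq]
    · rintro ⟨k, D⟩ hp
      rw [Finset.mem_sigma] at hp
      obtain ⟨hk, hD⟩ := hp
      dsimp only at hk hD ⊢
      have := Om_erase K pt D k hk (e3 k hk) (mem_verts.1 hD).2.1 (K.card - 2) ∅ (by simp)
      rw [Finset.card_erase_of_mem hk, show K.card - 1 - 1 = K.card - 2 from by omega, ← this]
      rfl

end

/-! maximality -/

lemma maxP : ∀ (K : Finset (Fin d)), K.Nonempty → ∀ R : Finset (Fin n), MaxP R K := by
  intro K
  induction K using Finset.strongInduction with
  | H K ih =>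
  intro hK R M hM A hAK hAne hAoff hsep
  by_cases hR : R.Nonempty
  swap
  · rw [Finset.not_nonempty_iff_eq_empty] at hR
    subst hR
    obtain ⟨k, hk⟩ := hK
    have := hM.bdry k hk
    have e : A = fun i => if i ∈ (∅ : Finset (Fin n)) then ({k} : Finset (Fin d)) else ∅ := by
      funext i; rw [if_neg (by simp), hAoff i (by simp)]
    rw [e]; exact this
  have hmax : ∀ (R' : Finset (Fin n)) (Q : Finset (Fin d)), Q.Nonempty → Q ⊂ K → MaxP R' Q :=
    fun R' Q h1 h2 => ih Q h2 h1 R'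
  let Lp : Ty n d → Fin d → Prop := fun D k =>
    ((∃ i, k ∈ A i) ∧ ∀ i, k ∈ A i → k ∈ D i) ∨ ((¬ ∃ i, k ∈ A i) ∧ ∃ i, k ∈ D i)
  have hLuse : ∀ D k, Lp D k → ∃ i, k ∈ D i := by
    rintro D k (⟨⟨i, h1⟩, h2⟩ | ⟨-, h⟩)
    · exact ⟨i, h2 i h1⟩
    · exact h
  have hLmono : ∀ D E, D ≤ E → ∀ k, Lp D k → Lp E k := by
    rintro D E h k (⟨h1, h2⟩ | ⟨h1, i, h2⟩)
    · exact Or.inl ⟨h1, fun i hi => h i (h2 i hi)⟩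
    · exact Or.inr ⟨h1, i, h i h2⟩
  have hLne : ∀ D ∈ M, ∃ k, Lp D k := by
    intro D hD
    obtain ⟨ξ, μ, h1, h2⟩ := hsep D hD
    let C : Finset (Fin d) := Finset.univ.filter (fun k => ∃ i, k ∈ A i)
    have hC : C.Nonempty := by
      obtain ⟨i, hi⟩ := hR
      obtain ⟨x, hx⟩ := hAne i hi
      exact ⟨x, by simp only [C, Finset.mem_filter, Finset.mem_univ, true_and]; exact ⟨i, hx⟩⟩
    obtain ⟨k, hk, hmin⟩ := C.exists_min_image ξ hC
    have hk' : ∃ i, k ∈ A i := by simpa [C] using hk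
    by_cases hall : ∀ i, k ∈ A i → k ∈ D i
    · exact ⟨k, Or.inl ⟨hk', hall⟩⟩
    · push Not at hall
      obtain ⟨i, hi, hiD⟩ := hall
      have hiR : i ∈ R := by
        by_contra h; rw [hAoff i h] at hi; simp at hi
      obtain ⟨x, hx⟩ := hM.ne D hD i hiR
      have hlt : μ i < ξ k := lt_of_le_of_ne (h1 i k hi).1 (fun h => hiD ((h1 i k hi).2 h))
      refine ⟨x, Or.inr ⟨fun hxA => ?_, i, hx⟩⟩
      have hxC : x ∈ C := by simpa [C] using hxA
      have := hmin x hxC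
      have := (h2 i x hx).1
      omega
  have hK' := hK
  obtain ⟨k0, -⟩ := hK'
  let lam : Ty n d → Fin d := fun D => if h : ∃ k, Lp D k then h.choose else k0
  have hlam : ∀ D ∈ M, Lp D (lam D) := by
    intro D hD
    have : lam D = (hLne D hD).choose := dif_pos (hLne D hD)
    rw [this]; exact (hLne D hD).choose_spec
  have hs := sperner lam K (ZZ M id) (by simp [ZZ])
    (fun K' hK' hne => bd_ZZ hM hR hmax id hK' hne)
    (fun K' hK' => by
      refine sup_mono ?_ (ZZ_sup hM id K')
      rintro σ ⟨F, rfl, h2, h3, h4⟩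
      intro k hk
      obtain ⟨D', hD', rfl⟩ := Finset.mem_image.1 hk
      obtain ⟨D, hD, rfl⟩ := mem_im hD'
      obtain ⟨i, hi⟩ := hLuse D _ (hlam D (h3 D hD).1)
      exact (h3 D hD).2 i hi)
  obtain ⟨σ, ⟨F, rfl, h2, h3, h4, -⟩, himg⟩ := rho_ne lam K _ _ (ZZ_sup hM id K) hs
  obtain ⟨V, hV, hFV⟩ := h4 (Finset.nonempty_iff_ne_empty.1 hK)
  obtain ⟨v1, v2, v3⟩ := mem_verts.1 hV
  have hLV : ∀ k ∈ K, Lp V k := by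
    intro k hk
    rw [← himg] at hk
    obtain ⟨D', hD', rfl⟩ := Finset.mem_image.1 hk
    obtain ⟨D, hD, rfl⟩ := mem_im hD'
    exact hLmono D V (hFV D hD) _ (hlam D (h3 D hD).1)
  refine hM.face_mem v1 (fun i k hk => ?_) (hsep V v1) hAne
  rcases hLV k (hAK i hk) with h | h
  · exact h.2 i hk
  · exact absurd ⟨i, hk⟩ h.1

end
end TOMD

namespace TOMD
noncomputable section
open scoped Classical

section kkm
variable {E : Type*} [NormedAddCommGroup E] [NormedSpace ℝ E]

def bary (σ : Finset E) : E := (σ.card : ℝ)⁻¹ • ∑ x ∈ σ, x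

lemma bary_mem {σ : Finset E} (h : σ.Nonempty) : bary σ ∈ convexHull ℝ (σ : Set E) := by
  have hc : (σ.card : ℝ) ≠ 0 := by exact_mod_cast (Finset.card_pos.2 h).ne'
  unfold bary
  rw [Finset.smul_sum]
  refine (convex_convexHull ℝ _).sum_mem (fun _ _ => by positivity) ?_
    (fun x hx => subset_convexHull ℝ _ hx)
  simp [hc]

lemma bary_dist {σ : Finset E} {N : ℕ} (hN : σ.card ≤ N + 1) {δ : ℝ} (hδ : 0 ≤ δ)
    (h : ∀ x ∈ σ, ∀ y ∈ σ, dist x y ≤ δ) {y : E} (hy : y ∈ convexHull ℝ (σ : Set E)) :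
    dist y (bary σ) ≤ (N / (N + 1) : ℝ) * δ := by
  have : (σ : Set E) ⊆ Metric.closedBall (bary σ) ((N / (N + 1) : ℝ) * δ) := by
    intro y hy
    have hy' : y ∈ σ := hy
    rw [Metric.mem_closedBall]
    have hc0 : 0 < σ.card := Finset.card_pos.2 ⟨y, hy'⟩
    have hc : (0:ℝ) < σ.card := by exact_mod_cast hc0
    have e : y - bary σ = (σ.card : ℝ)⁻¹ • ∑ x ∈ σ.erase y, (y - x) := by
      have : ∑ x ∈ σ.erase y, (y - x) = ∑ x ∈ σ, (y - x) := by
        rw [← Finset.sum_erase_add σ _ hy']; simp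
      rw [this, Finset.sum_sub_distrib, smul_sub, Finset.sum_const, ← Nat.cast_smul_eq_nsmul ℝ,
        smul_smul, inv_mul_cancel₀ hc.ne', one_smul]; rfl
    rw [dist_eq_norm, e, norm_smul]
    have h1 : ‖∑ x ∈ σ.erase y, (y - x)‖ ≤ (σ.card - 1 : ℝ) * δ := by
      refine (norm_sum_le _ _).trans ?_
      refine (Finset.sum_le_card_nsmul _ _ δ (fun x hx => ?_)).trans ?_
      · rw [← dist_eq_norm]; exact h y hy' x (Finset.mem_of_mem_erase hx)
      · rw [Finset.card_erase_of_mem hy', nsmul_eq_mul, Nat.cast_sub hc0]; simp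
    have h2 : (σ.card : ℝ)⁻¹ * (σ.card - 1 : ℝ) ≤ N / (N + 1) := by
      rw [inv_mul_eq_div, div_le_div_iff₀ hc (by positivity)]
      have : (σ.card : ℝ) ≤ N + 1 := by exact_mod_cast hN
      nlinarith
    rw [norm_inv, Real.norm_natCast]
    calc (σ.card : ℝ)⁻¹ * ‖∑ x ∈ σ.erase y, (y - x)‖
        ≤ (σ.card : ℝ)⁻¹ * ((σ.card - 1 : ℝ) * δ) := by gcongr
      _ = ((σ.card : ℝ)⁻¹ * (σ.card - 1 : ℝ)) * δ := by ring
      _ ≤ _ := by gcongr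
  exact convexHull_min this (convex_closedBall _ _) hy

lemma sdA_sup {N : ℕ} {δ : ℝ} (hδ : 0 ≤ δ) (m : ℕ) : ∀ σ : Finset E, σ.card = m → m ≤ N + 1 →
    (∀ x ∈ σ, ∀ y ∈ σ, dist x y ≤ δ) →
    sdA bary m σ ∈ Sup (fun τ : Finset E => τ.card ≤ m ∧ (τ : Set E) ⊆ convexHull ℝ (σ : Set E) ∧
      ∀ x ∈ τ, ∀ y ∈ τ, dist x y ≤ (N / (N + 1) : ℝ) * δ) := by
  induction m with
  | zero => intro σ _ _ _; exact sup_single (by simp)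
  | succ m ih =>
    intro σ hσ hm hd
    have hne : σ.Nonempty := Finset.card_pos.1 (by omega)
    have hsum : ∑ x ∈ σ, sdA bary m (σ.erase x) ∈ Sup (fun τ : Finset E => τ.card ≤ m ∧
        (τ : Set E) ⊆ convexHull ℝ (σ : Set E) ∧
        ∀ x ∈ τ, ∀ y ∈ τ, dist x y ≤ (N / (N + 1) : ℝ) * δ) := by
      refine Submodule.sum_mem _ (fun x hx => ?_)
      refine sup_mono ?_ (ih (σ.erase x) (by rw [Finset.card_erase_of_mem hx]; omega) (by omega)
        (fun a ha b hb => hd a (Finset.mem_of_mem_erase ha) b (Finset.mem_of_mem_erase hb)))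
      rintro τ ⟨h1, h2, h3⟩
      refine ⟨h1, h2.trans (convexHull_mono ?_), h3⟩
      exact_mod_cast Finset.erase_subset x σ
    refine sup_cone ?_ hsum
    rintro τ ⟨h1, h2, h3⟩
    have hb : ∀ y ∈ τ, dist y (bary σ) ≤ (N / (N + 1) : ℝ) * δ := fun y hy =>
      bary_dist (hσ ▸ hm) hδ hd (h2 hy)
    refine ⟨(Finset.card_insert_le _ _).trans (by omega), ?_, ?_⟩
    · intro x hx
      rcases Finset.mem_insert.1 (Finset.mem_coe.1 hx) with rfl | hx
      · exact bary_mem hne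
      · exact h2 hx
    · intro x hx y hy
      rcases Finset.mem_insert.1 hx with rfl | hx <;> rcases Finset.mem_insert.1 hy with rfl | hy
      · rw [dist_self]; positivity
      · rw [dist_comm]; exact hb y hy
      · exact hb x hx
      · exact h3 x hx y hy

def sdZ {B : Type*} (Z : Finset B → Ch E) : ℕ → Finset B → Ch E
  | 0, K => Z K
  | m + 1, K => sd bary (sdZ Z m K)

lemma kkm {B : Type*} [Fintype B] [Nonempty B] [DecidableEq B]
    (Z : Finset B → Ch E) (P : Finset B → Finset E → Prop)
    (h0 : Z ∅ = Finsupp.single ∅ 1)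
    (hbd : ∀ K, K.Nonempty → bd (Z K) = ∑ k ∈ K, Z (K.erase k))
    (hZ : ∀ K, Z K ∈ Sup (P K)) (hfin : {σ | ∃ K, P K σ}.Finite)
    (f : B → E → ℝ) (hf : ∀ k, Continuous (f k))
    (hlab : ∀ K σ, P K σ → ∀ p ∈ convexHull ℝ (σ : Set E), ∀ k, k ∉ K → ∃ k', f k' p < f k p) :
    ∃ σ, P Finset.univ σ ∧ ∃ p ∈ convexHull ℝ (σ : Set E), ∀ k k', f k p ≤ f k' p := by
  -- labels
  have hmin : ∀ p : E, ∃ k, ∀ k', f k p ≤ f k' p := fun p => by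
    obtain ⟨k, -, hk⟩ := Finset.univ.exists_min_image (fun k => f k p) Finset.univ_nonempty
    exact ⟨k, fun k' => hk k' (Finset.mem_univ _)⟩
  choose lam hlam using hmin
  set S : Finset E := hfin.toFinset.biUnion id with hS
  have hPS : ∀ K σ, P K σ → σ ⊆ S := fun K σ h =>
    Finset.subset_biUnion_of_mem id (hfin.mem_toFinset.2 ⟨K, h⟩)
  set N := S.card with hN
  set D := Metric.diam (S : Set E) with hD
  set c : ℝ := N / (N + 1) with hc
  have hc0 : 0 ≤ c := by positivity
  have hc1 : c < 1 := by rw [hc, div_lt_one (by positivity)]; linarith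
  have hD0 : 0 ≤ D := Metric.diam_nonneg
  have hsup : ∀ m K, sdZ Z m K ∈ Sup (fun τ : Finset E => ∃ σ, P K σ ∧
      (τ : Set E) ⊆ convexHull ℝ (σ : Set E) ∧ τ.card ≤ N + 1 ∧
      ∀ x ∈ τ, ∀ y ∈ τ, dist x y ≤ c ^ m * D) := by
    intro m K
    induction m with
    | zero =>
      refine sup_mono ?_ (hZ K)
      intro σ hσ
      have hsub := hPS K σ hσ
      refine ⟨σ, hσ, subset_convexHull ℝ _, (Finset.card_le_card hsub).trans (Nat.le_succ _), ?_⟩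
      intro x hx y hy
      rw [pow_zero, one_mul]
      exact Metric.dist_le_diam_of_mem S.finite_toSet.isBounded (hsub hx) (hsub hy)
    | succ m ih =>
      refine sup_lin (sd bary) _ ?_ ih
      rintro τ ⟨σ, hσ, h1, h2, h3⟩
      rw [sd_single]
      refine sup_mono ?_ (sdA_sup (N := N) (δ := c ^ m * D) (by positivity) τ.card τ rfl h2 h3)
      rintro τ' ⟨g1, g2, g3⟩
      refine ⟨σ, hσ, g2.trans (convexHull_min h1 (convex_convexHull ℝ _)), g1.trans h2, ?_⟩
      intro x hx y hy
      calc _ ≤ _ := g3 x hx y hy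
        _ = _ := by rw [pow_succ]; ring
  have hz0 : ∀ m, sdZ Z m ∅ = Finsupp.single ∅ 1 := by
    intro m
    induction m with
    | zero => exact h0
    | succ m ih => rw [sdZ, ih, sd_single]; rfl
  have hzb : ∀ m K, K.Nonempty → bd (sdZ Z m K) = ∑ k ∈ K, sdZ Z m (K.erase k) := by
    intro m K hK
    induction m with
    | zero => exact hbd K hK
    | succ m ih => rw [sdZ, bd_sd, ih, map_sum]; rfl
  have hτ : ∀ m, ∃ τ : Finset E, (∃ σ, P Finset.univ σ ∧
      (τ : Set E) ⊆ convexHull ℝ (σ : Set E) ∧ τ.card ≤ N + 1 ∧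
      ∀ x ∈ τ, ∀ y ∈ τ, dist x y ≤ c ^ m * D) ∧ τ.image lam = Finset.univ := by
    intro m
    refine rho_ne lam Finset.univ _ _ (hsup m Finset.univ) ?_
    refine sperner lam Finset.univ (sdZ Z m) (hz0 m) (fun K _ hK => hzb m K hK) (fun K _ => ?_)
    refine sup_mono ?_ (hsup m K)
    rintro τ ⟨σ, hσ, h1, -, -⟩ k hk
    obtain ⟨x, hx, rfl⟩ := Finset.mem_image.1 hk
    by_contra hkK
    obtain ⟨k', hk'⟩ := hlab K σ hσ x (h1 hx) _ hkK
    exact absurd (hlam x k') (not_le.2 hk')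
  choose τ hτ1 hτ2 using hτ
  have hq : ∀ m k, ∃ x ∈ τ m, lam x = k := fun m k => by
    have : k ∈ (τ m).image lam := by rw [hτ2]; exact Finset.mem_univ k
    exact Finset.mem_image.1 this
  choose q hq1 hq2 using hq
  obtain ⟨k0⟩ := ‹Nonempty B›
  have hfin' : {σ | P Finset.univ σ}.Finite := hfin.subset (fun σ h => ⟨_, h⟩)
  have hcomp : IsCompact (⋃ σ ∈ {σ | P Finset.univ σ}, convexHull ℝ (σ : Set E)) :=
    hfin'.isCompact_biUnion (fun σ _ => σ.finite_toSet.isCompact_convexHull ℝ)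
  obtain ⟨p, hp, φ, hφ, hlim⟩ := hcomp.tendsto_subseq (x := fun m => q m k0) (fun m => by
    obtain ⟨σ, hσ, h1, -⟩ := hτ1 m
    exact Set.mem_biUnion (x := σ) hσ (h1 (hq1 m k0)))
  obtain ⟨σ, hσ, hpσ⟩ := Set.mem_iUnion₂.1 hp
  refine ⟨σ, hσ, p, hpσ, fun k k' => ?_⟩
  have hqk : Filter.Tendsto (fun m => q (φ m) k) Filter.atTop (nhds p) := by
    refine (tendsto_iff_of_dist ?_).1 hlim
    have ht : Filter.Tendsto (fun m => c ^ m * D) Filter.atTop (nhds 0) := by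
      simpa using (tendsto_pow_atTop_nhds_zero_of_lt_one hc0 hc1).mul_const D
    refine squeeze_zero (fun _ => dist_nonneg) (fun m => ?_) (ht.comp hφ.tendsto_atTop)
    obtain ⟨σ, hσ, h1, h2, h3⟩ := hτ1 (φ m)
    exact h3 _ (hq1 _ _) _ (hq1 _ _)
  refine le_of_tendsto_of_tendsto' (((hf k).tendsto p).comp hqk) (((hf k').tendsto p).comp hqk)
    (fun m => ?_)
  have := hlam (q (φ m) k) k'
  rw [hq2] at this
  exact this

end kkm

end
end TOMD

namespace TOMD
noncomputable section
open scoped Classical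

variable {n d : ℕ}

structure Good (A D : Ty n d) (ξ : Fin d → ℤ) (μ : Fin n → ℤ) : Prop where
  l : ∀ i, ∀ k ∈ A i, μ i ≤ ξ k ∧ (μ i = ξ k → k ∈ D i)
  r : ∀ i, ∀ k ∈ D i, ξ k ≤ μ i ∧ (ξ k = μ i → k ∈ A i)
  u : ∀ k, (∀ i, k ∉ D i) → ∀ i, ∀ k' ∈ D i, ξ k' < ξ k

lemma Good.exists {A D : Ty n d} (h : Sep A D) : ∃ ξ μ, Good A D ξ μ := by
  obtain ⟨ξ, μ, h1, h2⟩ := h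
  set N : ℤ := 1 + (∑ k, |ξ k| + ∑ i, |μ i|) with hN
  have ha : ∀ k, |ξ k| ≤ ∑ k, |ξ k| := fun i =>
    Finset.single_le_sum (f := fun i => |ξ i|) (fun _ _ => abs_nonneg _) (Finset.mem_univ i)
  have hb : ∀ k, |μ k| ≤ ∑ k, |μ k| := fun i =>
    Finset.single_le_sum (f := fun i => |μ i|) (fun _ _ => abs_nonneg _) (Finset.mem_univ i)
  have ha0 : (0:ℤ) ≤ ∑ k, |ξ k| := Finset.sum_nonneg (fun _ _ => abs_nonneg _)
  have hb0 : (0:ℤ) ≤ ∑ k, |μ k| := Finset.sum_nonneg (fun _ _ => abs_nonneg _)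
  have hξ : ∀ k, ξ k < N := fun k => by have := ha k; have := le_abs_self (ξ k); omega
  have hμ : ∀ k, μ k < N := fun k => by have := hb k; have := le_abs_self (μ k); omega
  refine ⟨fun k => if ∃ i, k ∈ D i then ξ k else N, μ, fun i k hk => ?_, fun i k hk => ?_,
    fun k hk i k' hk' => ?_⟩
  · split_ifs with hu
    · exact h1 i k hk
    · exact ⟨(hμ i).le, fun e => absurd e (hμ i).ne⟩
  · rw [if_pos ⟨i, hk⟩]; exact h2 i k hk
  · rw [if_pos ⟨i, hk'⟩, if_neg (by push Not; exact hk)]; exact hξ k'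

def pt (D : Ty n d) : Ty n d → ℝ := Pi.single D 1

lemma hull_pt {F : Finset (Ty n d)} {σ : Finset (Ty n d → ℝ)} (hσ : ∀ x ∈ σ, ∃ D ∈ F, pt D = x)
    {p : Ty n d → ℝ}
    (hp : p ∈ convexHull ℝ (σ : Set (Ty n d → ℝ))) :
    (∀ D, 0 ≤ p D) ∧ ∑ D, p D = 1 ∧ ∀ D, D ∉ F → p D = 0 := by
  have hconv : Convex ℝ {p : Ty n d → ℝ | (∀ D, 0 ≤ p D) ∧ ∑ D, p D = 1 ∧ ∀ D, D ∉ F → p D = 0} := by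
    rintro x ⟨x1, x2, x3⟩ y ⟨y1, y2, y3⟩ a b ha hb hab
    refine ⟨fun D => ?_, ?_, fun D hD => ?_⟩
    · have := x1 D; have := y1 D
      simp only [Pi.add_apply, Pi.smul_apply, smul_eq_mul]; positivity
    · simp only [Pi.add_apply, Pi.smul_apply, smul_eq_mul]
      rw [Finset.sum_add_distrib, ← Finset.mul_sum, ← Finset.mul_sum, x2, y2]; linarith
    · simp [x3 D hD, y3 D hD]
  refine convexHull_min ?_ hconv hp
  intro x hx
  obtain ⟨D, hD, rfl⟩ := hσ x hx
  refine ⟨fun D' => ?_, ?_, fun D' hD' => ?_⟩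
  · unfold pt; rw [Pi.single_apply]; split_ifs <;> norm_num
  · unfold pt; simp
  · unfold pt; rw [Pi.single_apply, if_neg]; rintro rfl; exact hD' hD

lemma chain_min {F : Finset (Ty n d)} (hF : F.Nonempty) (hc : ∀ D ∈ F, ∀ E ∈ F, D ≤ E ∨ E ≤ D) :
    ∃ D ∈ F, ∀ E ∈ F, D ≤ E := by
  obtain ⟨D, hD⟩ := F.exists_minimal hF
  refine ⟨D, hD.1, fun E hE => ?_⟩
  rcases hc D hD.1 E hE with h | h
  · exact h
  · exact hD.2 hE h

/-- one side of the limit argument -/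
lemma side {A : Ty n d} {p : Ty n d → ℝ} (p0 : ∀ D, 0 ≤ p D) {ξ : Ty n d → Fin d → ℤ}
    {μ : Ty n d → Fin n → ℤ} (hg : ∀ D, p D ≠ 0 → Good A D (ξ D) (μ D)) {D0 : Ty n d}
    (hD0 : p D0 ≠ 0) (hmin : ∀ D, p D ≠ 0 → D0 ≤ D) (hne : ∀ i, (D0 i).Nonempty) {j0 : Fin d}
    (hj : ∀ k, 0 ≤ ∑ D, p D * ((ξ D k : ℝ) - ξ D j0)) {k : Fin d}
    (hk : ∑ D, p D * ((ξ D k : ℝ) - ξ D j0) = 0) {i : Fin n} (hki : k ∈ A i) :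
    k ∈ D0 i ∧ ∀ k' ∈ D0 i, ∑ D, p D * ((ξ D k' : ℝ) - ξ D j0) = 0 ∧ k' ∈ A i := by
  have key : ∀ k' ∈ D0 i, ∑ D, p D * ((ξ D k' : ℝ) - ξ D j0) = 0 ∧ ξ D0 k' = μ D0 i ∧
      μ D0 i = ξ D0 k := by
    intro k' hk'
    have h1 : ∀ D, 0 ≤ p D * ((μ D i : ℝ) - ξ D k') := by
      intro D
      by_cases h : p D = 0
      · rw [h, zero_mul]
      · have : (ξ D k' : ℝ) ≤ μ D i := by
          exact_mod_cast ((hg D h).r i k' (hmin D h i hk')).1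
        exact mul_nonneg (p0 D) (by linarith)
    have h2 : ∀ D, 0 ≤ p D * ((ξ D k : ℝ) - μ D i) := by
      intro D
      by_cases h : p D = 0
      · rw [h, zero_mul]
      · have : (μ D i : ℝ) ≤ ξ D k := by
          exact_mod_cast ((hg D h).l i k hki).1
        exact mul_nonneg (p0 D) (by linarith)
    have e : ∑ D, p D * ((μ D i : ℝ) - ξ D k') + ∑ D, p D * ((ξ D k : ℝ) - μ D i)
        + ∑ D, p D * ((ξ D k' : ℝ) - ξ D j0) = 0 := by
      rw [← hk, ← Finset.sum_add_distrib, ← Finset.sum_add_distrib]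
      exact Finset.sum_congr rfl (fun D _ => by ring)
    have s1 := Finset.sum_nonneg (fun D (_ : D ∈ Finset.univ) => h1 D)
    have s2 := Finset.sum_nonneg (fun D (_ : D ∈ Finset.univ) => h2 D)
    have s3 := hj k'
    have z1 : ∑ D, p D * ((μ D i : ℝ) - ξ D k') = 0 := by linarith
    have z2 : ∑ D, p D * ((ξ D k : ℝ) - μ D i) = 0 := by linarith
    have z3 : ∑ D, p D * ((ξ D k' : ℝ) - ξ D j0) = 0 := by linarith
    have y1 := (Finset.sum_eq_zero_iff_of_nonneg (fun D _ => h1 D)).1 z1 D0 (Finset.mem_univ _)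
    have y2 := (Finset.sum_eq_zero_iff_of_nonneg (fun D _ => h2 D)).1 z2 D0 (Finset.mem_univ _)
    have w1 := (mul_eq_zero.1 y1).resolve_left hD0
    have w2 := (mul_eq_zero.1 y2).resolve_left hD0
    refine ⟨z3, ?_, ?_⟩
    · have : (ξ D0 k' : ℝ) = μ D0 i := by linarith
      exact_mod_cast this
    · have : (μ D0 i : ℝ) = ξ D0 k := by linarith
      exact_mod_cast this
  obtain ⟨x, hx⟩ := hne i
  refine ⟨((hg D0 hD0).l i k hki).2 (key x hx).2.2, fun k' hk' => ⟨(key k' hk').1, ?_⟩⟩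
  exact ((hg D0 hD0).r i k' hk').2 (key k' hk').2.1

/-- strict inequality on hulls -/
lemma side_lt {A : Ty n d} {p : Ty n d → ℝ} (p0 : ∀ D, 0 ≤ p D) (p1 : ∑ D, p D = 1)
    {ξ : Ty n d → Fin d → ℤ}
    {μ : Ty n d → Fin n → ℤ} (hg : ∀ D, p D ≠ 0 → Good A D (ξ D) (μ D)) {k k' j0 : Fin d}
    (hk : ∀ D, p D ≠ 0 → ∀ i, k ∉ D i) {i : Fin n} (hk' : ∀ D, p D ≠ 0 → k' ∈ D i) :
    ∑ D, p D * ((ξ D k' : ℝ) - ξ D j0) < ∑ D, p D * ((ξ D k : ℝ) - ξ D j0) := by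
  have hlt : ∀ D, p D ≠ 0 → p D * ((ξ D k' : ℝ) - ξ D j0) < p D * ((ξ D k : ℝ) - ξ D j0) := by
    intro D hD
    have : (ξ D k' : ℝ) < ξ D k := by exact_mod_cast (hg D hD).u k (hk D hD) i k' (hk' D hD)
    exact mul_lt_mul_of_pos_left (by linarith) (lt_of_le_of_ne (p0 D) (Ne.symm hD))
  refine Finset.sum_lt_sum (fun D _ => ?_) ?_
  · by_cases h : p D = 0
    · simp [h]
    · exact (hlt D h).le
  · by_contra hn
    push Not at hn
    have : ∑ D, p D = 0 := Finset.sum_eq_zero (fun D _ => by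
      by_contra h
      exact absurd (hlt D h) (not_lt.2 (hn D (Finset.mem_univ _))))
    rw [this] at p1; norm_num at p1

set_option maxHeartbeats 1000000 in
lemma elim_core (hn : 0 < n) (hd : 0 < d) {M : Set (Ty n d)} (hM : T Finset.univ Finset.univ M)
    {A B : Ty n d} (hA : ∀ D ∈ M, Sep A D) (hB : ∀ D ∈ M, Sep B D)
    (hAne : ∀ k, ∃ i, k ∈ A i) (hBne : ∀ k, ∃ i, k ∈ B i) (j0 : Fin d) :
    ∃ V ∈ M, Conn Finset.univ V ∧ ∃ h : Fin n → ℤ, ∃ S S' : Finset (Fin d), j0 ∈ S ∧ j0 ∈ S' ∧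
      (∀ k, k ∈ S ∨ k ∈ S') ∧
      ∀ k i, i ∈ rf h (dualType V k) ↔ (k ∈ S ∧ k ∈ A i) ∨ (k ∈ S' ∧ k ∈ B i) := by
  have : NeZero n := ⟨hn.ne'⟩
  have : NeZero d := ⟨hd.ne'⟩
  have hgA : ∀ D : Ty n d, ∃ ξ μ, D ∈ M → Good A D ξ μ := fun D => by
    by_cases h : D ∈ M
    · obtain ⟨ξ, μ, hg⟩ := Good.exists (hA D h)
      exact ⟨ξ, μ, fun _ => hg⟩
    · exact ⟨0, 0, fun h' => absurd h' h⟩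
  have hgB : ∀ D : Ty n d, ∃ ξ μ, D ∈ M → Good B D ξ μ := fun D => by
    by_cases h : D ∈ M
    · obtain ⟨ξ, μ, hg⟩ := Good.exists (hB D h)
      exact ⟨ξ, μ, fun _ => hg⟩
    · exact ⟨0, 0, fun h' => absurd h' h⟩
  choose ξ μ hgA using hgA
  choose η ν hgB using hgB
  let a : Fin d → (Ty n d → ℝ) → ℝ := fun k p => ∑ D, p D * ((ξ D k : ℝ) - ξ D j0)
  let b : Fin d → (Ty n d → ℝ) → ℝ := fun k p => ∑ D, p D * ((η D k : ℝ) - η D j0)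
  have hac : ∀ k, Continuous (a k) := fun k => by
    refine continuous_finsetSum _ (fun D _ => ?_)
    exact (continuous_apply D).mul continuous_const
  have hbc : ∀ k, Continuous (b k) := fun k => by
    refine continuous_finsetSum _ (fun D _ => ?_)
    exact (continuous_apply D).mul continuous_const
  obtain ⟨σ, ⟨F, hσ, hch, hFM, hV, -⟩, p, hp, hpk⟩ := kkm (ZZ M pt) (ZP M pt) (by simp [ZZ])
    (fun K hK => bd_ZZ hM Finset.univ_nonempty (fun R' Q hQ _ => maxP Q hQ R') pt
      (Finset.subset_univ K) hK)
    (fun K => ZZ_sup hM pt K)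
    ((Set.finite_range (fun F : Finset (Ty n d) =>
        @Finset.image _ _ (fun a b => Classical.propDecidable (a = b)) pt F)).subset (by
      rintro σ ⟨K, F, hF, -⟩
      exact ⟨F, hF.symm⟩))
    (fun k p => min (a k p) (b k p)) (fun k => (hac k).min (hbc k))
    (by
      rintro K σ ⟨F, hσ, hch, hFM, -, -⟩ p hp k hk
      obtain ⟨p0, p1, p2⟩ := hull_pt (fun x hx => mem_im (hσ ▸ hx)) hp
      have hF : F.Nonempty := by
        rw [Finset.nonempty_iff_ne_empty]; rintro rfl
        rw [Finset.sum_eq_zero (fun D _ => p2 D (by simp))] at p1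
        norm_num at p1
      have hpF : ∀ D, p D ≠ 0 → D ∈ F := fun D h => by
        by_contra hc; exact h (p2 D hc)
      obtain ⟨D0, hD0, hmin⟩ := chain_min hF hch
      obtain ⟨k', hk'⟩ := hM.ne D0 (hFM D0 hD0).1 0 (Finset.mem_univ _)
      refine ⟨k', min_lt_min ?_ ?_⟩
      · exact side_lt p0 p1 (fun D h => hgA D (hFM D (hpF D h)).1)
          (fun D h i hi => hk ((hFM D (hpF D h)).2 i hi)) (fun D h => hmin D (hpF D h) 0 hk')
      · exact side_lt p0 p1 (fun D h => hgB D (hFM D (hpF D h)).1)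
          (fun D h i hi => hk ((hFM D (hpF D h)).2 i hi)) (fun D h => hmin D (hpF D h) 0 hk'))
  obtain ⟨p0, p1, p2⟩ := hull_pt (fun x hx => mem_im (hσ ▸ hx)) hp
  have hpF : ∀ D, p D ≠ 0 → D ∈ F := fun D h => by
    by_contra hc; exact h (p2 D hc)
  have ha0 : a j0 p = 0 := by simp [a]
  have hb0 : b j0 p = 0 := by simp [b]
  have hz : ∀ k, min (a k p) (b k p) = 0 := fun k => by
    have h1 := hpk k j0
    have h2 := hpk j0 k
    beta_reduce at h1 h2
    rw [ha0, hb0, min_self] at h1 h2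
    exact le_antisymm h1 h2
  have hap : ∀ k, 0 ≤ a k p := fun k => by rw [← hz k]; exact min_le_left _ _
  have hbp : ∀ k, 0 ≤ b k p := fun k => by rw [← hz k]; exact min_le_right _ _
  obtain ⟨D0, hD0, hmin⟩ := chain_min (F := F.filter (fun D => p D ≠ 0)) (by
      by_contra hc
      rw [Finset.not_nonempty_iff_eq_empty, Finset.filter_eq_empty_iff] at hc
      have : ∑ D, p D = 0 := Finset.sum_eq_zero (fun D _ => by
        by_contra h
        exact hc (hpF D h) h)
      rw [this] at p1; norm_num at p1)
    (fun D hD E hE => hch D (Finset.mem_filter.1 hD).1 E (Finset.mem_filter.1 hE).1)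
  obtain ⟨hD0F, hpD0⟩ := Finset.mem_filter.1 hD0
  have hmin' : ∀ D, p D ≠ 0 → D0 ≤ D := fun D h => hmin D (Finset.mem_filter.2 ⟨hpF D h, h⟩)
  have hD0M := (hFM D0 hD0F).1
  have hD0ne : ∀ i, (D0 i).Nonempty := fun i => hM.ne D0 hD0M i (Finset.mem_univ i)
  have sA : ∀ k, a k p = 0 → ∀ i, k ∈ A i → k ∈ D0 i ∧ ∀ k' ∈ D0 i, a k' p = 0 ∧ k' ∈ A i :=
    fun k hk i hi => side p0 (fun D h => hgA D (hFM D (hpF D h)).1) hpD0 hmin' hD0ne hap hk hi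
  have sB : ∀ k, b k p = 0 → ∀ i, k ∈ B i → k ∈ D0 i ∧ ∀ k' ∈ D0 i, b k' p = 0 ∧ k' ∈ B i :=
    fun k hk i hi => side p0 (fun D h => hgB D (hFM D (hpF D h)).1) hpD0 hmin' hD0ne hbp hk hi
  have hor : ∀ k, a k p = 0 ∨ b k p = 0 := fun k => by
    rcases min_choice (a k p) (b k p) with h | h
    · left; rw [← h]; exact hz k
    · right; rw [← h]; exact hz k
  let C : Fin d → Fin n → Prop := fun k i => (a k p = 0 ∧ k ∈ A i) ∨ (b k p = 0 ∧ k ∈ B i)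
  have hC1 : ∀ k i, C k i → k ∈ D0 i ∧ ∀ k' ∈ D0 i, C k' i := by
    rintro k i (⟨h1, h2⟩ | ⟨h1, h2⟩)
    · exact ⟨(sA k h1 i h2).1, fun k' hk' => Or.inl ((sA k h1 i h2).2 k' hk')⟩
    · exact ⟨(sB k h1 i h2).1, fun k' hk' => Or.inr ((sB k h1 i h2).2 k' hk')⟩
  have hCne : ∀ k, ∃ i, C k i := fun k => by
    rcases hor k with h | h
    · obtain ⟨i, hi⟩ := hAne k; exact ⟨i, Or.inl ⟨h, hi⟩⟩
    · obtain ⟨i, hi⟩ := hBne k; exact ⟨i, Or.inr ⟨h, hi⟩⟩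
  obtain ⟨V, hV, hFV⟩ := hV Finset.univ_nonempty.ne_empty
  obtain ⟨hVM, -, hVc⟩ := mem_verts.1 hV
  have hDV := hFV D0 hD0F
  obtain ⟨x, m, h1, h2⟩ := hM.sep D0 hD0M V hVM
  let h : Fin n → ℤ := fun i => if ∃ k, C k i then m i else m i + 1
  have hh1 : ∀ k i, C k i → h i = x k := fun k i hc => by
    have hk := (hC1 k i hc).1
    have : h i = m i := if_pos ⟨k, hc⟩
    rw [this]
    exact le_antisymm (h1 i k hk).1 (h2 i k (hDV i hk)).1
  have hh2 : ∀ k i, k ∈ V i → x k ≤ h i ∧ (h i = x k → C k i) := by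
    intro k i hk
    have hxm := h2 i k hk
    by_cases hc : ∃ k', C k' i
    · have : h i = m i := if_pos hc
      rw [this]
      refine ⟨hxm.1, fun e => ?_⟩
      obtain ⟨k', hk'⟩ := hc
      exact (hC1 k' i hk').2 k (hxm.2 e.symm)
    · have : h i = m i + 1 := if_neg hc
      rw [this]
      exact ⟨by omega, fun e => by omega⟩
  refine ⟨V, hVM, hVc, h, Finset.univ.filter (fun k => a k p = 0),
    Finset.univ.filter (fun k => b k p = 0), by simp [ha0], by simp [hb0], by simpa using hor, ?_⟩
  intro k i
  simp only [Finset.mem_filter, Finset.mem_univ, true_and]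
  change _ ↔ C k i
  rw [mem_rf, mem_dual]
  constructor
  · rintro ⟨hk, hmn⟩
    obtain ⟨i', hi'⟩ := hCne k
    have := hmn i' ((mem_dual _ _ _).2 (hDV i' (hC1 k i' hi').1))
    rw [hh1 k i' hi'] at this
    exact (hh2 k i hk).2 (le_antisymm this (hh2 k i hk).1)
  · intro hc
    refine ⟨hDV i (hC1 k i hc).1, fun i' hi' => ?_⟩
    rw [hh1 k i hc]
    exact (hh2 k i' ((mem_dual _ _ _).1 hi')).1

end
end TOMD

namespace TOMD
noncomputable section
open scoped Classical

variable {n d : ℕ}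

lemma conn_dim (hd : 0 < d) {V : Ty n d} (hV : Conn Finset.univ V) (hne : ∀ i, (V i).Nonempty) :
    typeDim V = 0 := by
  have : NeZero d := ⟨hd.ne'⟩
  have hadj : ∀ i, ∀ k ∈ V i, (typeGraph V).Adj (Sum.inl i) (Sum.inr k) := by
    intro i k hk
    simp only [typeGraph, SimpleGraph.fromRel_adj]
    exact ⟨by simp, Or.inl hk⟩
  have hZ := hV (Finset.univ.filter (fun k => (typeGraph V).Reachable (Sum.inr 0) (Sum.inr k)))
    ⟨Finset.subset_univ _, fun i => by
      by_cases h : (typeGraph V).Reachable (Sum.inr 0) (Sum.inl i)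
      · left; intro k hk
        simpa using h.trans (hadj i k hk).reachable
      · right
        rw [Finset.disjoint_left]
        intro k hk hk'
        apply h
        have h2 : (typeGraph V).Reachable (Sum.inr 0) (Sum.inr k) := by simpa using hk'
        exact h2.trans (hadj i k hk).reachable.symm⟩
  have hr : ∀ k, (typeGraph V).Reachable (Sum.inr 0) (Sum.inr k) := by
    rcases hZ with h | h
    · exfalso
      have : (0 : Fin d) ∈ (∅ : Finset (Fin d)) := by rw [← h]; simp
      simp at this
    · intro k
      have : k ∈ (Finset.univ : Finset (Fin d)) := Finset.mem_univ k
      rw [← h] at this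
      simpa using this
  have hall : ∀ v, (typeGraph V).Reachable (Sum.inr 0) v := by
    rintro (i | k)
    · obtain ⟨k, hk⟩ := hne i
      exact (hr k).trans (hadj i k hk).reachable.symm
    · exact hr k
  have hpre : (typeGraph V).Preconnected := fun u v => (hall u).symm.trans (hall v)
  have hs : Subsingleton (typeGraph V).ConnectedComponent := hpre.subsingleton_connectedComponent
  have hn : Nonempty (typeGraph V).ConnectedComponent :=
    ⟨(typeGraph V).connectedComponentMk (Sum.inr 0)⟩
  have : Nat.card (typeGraph V).ConnectedComponent = 1 :=
    Nat.card_eq_one_iff_unique.2 ⟨hs, hn⟩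
  unfold typeDim
  rw [this]; norm_num

lemma dim_used (hn : 0 < n) {V : Ty n d} (h : typeDim V = 0) (k : Fin d) : ∃ i, k ∈ V i := by
  have : NeZero n := ⟨hn.ne'⟩
  have hc : Nat.card (typeGraph V).ConnectedComponent = 1 := by
    unfold typeDim at h; omega
  obtain ⟨hs, -⟩ := Nat.card_eq_one_iff_unique.1 hc
  have hr : (typeGraph V).Reachable (Sum.inr k) (Sum.inl 0) :=
    SimpleGraph.ConnectedComponent.exact (Subsingleton.elim _ _)
  obtain ⟨w⟩ := hr
  cases w with
  | cons h _ =>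
    rename_i v _
    simp only [typeGraph, SimpleGraph.fromRel_adj] at h
    rcases v with i | k'
    · rcases h.2 with h | h
      · exact h.elim
      · exact ⟨i, h⟩
    · rcases h.2 with h | h <;> exact h.elim

lemma Sep.rf {X Y : Ty n d} (h : Sep X Y) (g : Fin d → ℤ) : Sep (fun i => rf g (X i)) Y := by
  have : ∀ i, ∃ a : ℤ, ∀ k ∈ X i, - g k ≤ a ∧ (a = - g k ↔ k ∈ TOMD.rf g (X i)) := by
    intro i
    by_cases hne : (X i).Nonempty
    · obtain ⟨k, hk, hm⟩ := (X i).exists_min_image g hne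
      refine ⟨- g k, fun k' hk' => ⟨neg_le_neg (hm k' hk'), ?_⟩⟩
      rw [mem_rf]
      constructor
      · intro e
        have e' : g k = g k' := neg_injective e
        exact ⟨hk', fun x hx => e' ▸ hm x hx⟩
      · rintro ⟨-, h⟩
        rw [le_antisymm (hm k' hk') (h k hk)]
    · refine ⟨0, fun k hk => absurd ⟨k, hk⟩ hne⟩
  choose a ha using this
  exact h.face a (fun k => - g k) (fun i => rf_subset _ _) ha

lemma refine_rf (A : Ty n d) {P : List (Finset (Fin d))} (hP' : IsOrderedPartition P) :
    refineType A P = fun i => TOMD.rf (hP P) (A i) := by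
  funext i
  exact refineEntry_eq P (A i) (by
    have := hP'.2.2
    rw [this]; exact Finset.subset_univ _)

def Md (M : Set (Ty n d)) : Set (Ty d n) := {B | ∃ A ∈ M, typeDim A = 0 ∧
      ∃ P : List (Finset (Fin n)), IsOrderedPartition P ∧ B = refineType (dualType A) P}

lemma mem_Md {M : Set (Ty n d)} {B : Ty d n} : B ∈ Md M ↔ ∃ A ∈ M, typeDim A = 0 ∧
    ∃ h : Fin n → ℤ, B = fun k => TOMD.rf h (dualType A k) := by
  constructor
  · rintro ⟨A, hA, hd, P, hP', rfl⟩
    exact ⟨A, hA, hd, hP P, refine_rf _ hP'⟩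
  · rintro ⟨A, hA, hd, h, rfl⟩
    obtain ⟨P, h1, h2⟩ := exists_partition h
    exact ⟨A, hA, hd, P, h1, funext fun k => (h2 _).symm⟩

lemma big {M : Set (Ty n d)} (hM : T Finset.univ Finset.univ M) (hd : 0 < d) (i : Fin n) :
    ∃ V ∈ M, V i = Finset.univ := by
  have : NeZero d := ⟨hd.ne'⟩
  have : ∀ K : Finset (Fin d), ∃ V ∈ M, K ⊆ V i := by
    intro K
    induction K using Finset.induction_on with
    | empty => exact ⟨_, hM.bdry 0 (Finset.mem_univ _), Finset.empty_subset _⟩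
    | insert k K _ ih =>
      obtain ⟨V, hV, hs⟩ := ih
      obtain ⟨C, hC, hCi, -⟩ := hM.elim V hV _ (hM.bdry k (Finset.mem_univ _)) i (Finset.mem_univ i)
      refine ⟨C, hC, ?_⟩
      rw [hCi]
      intro x hx
      rcases Finset.mem_insert.1 hx with rfl | hx
      · exact Finset.mem_union_right _ (by simp)
      · exact Finset.mem_union_left _ (hs hx)
  obtain ⟨V, hV, h⟩ := this Finset.univ
  exact ⟨V, hV, Finset.univ_subset_iff.1 h⟩

theorem main (hn : 0 < n) (hd : 0 < d) (M : Set (Ty n d)) (hM0 : IsTOM n d M) :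
    IsTOM d n (Md M) := by
  have hM := T.of_isTOM hM0
  have hrow : ∀ A ∈ M, ∀ i, (A i).Nonempty := hM0.1
  have hne : ∀ B ∈ Md M, ∀ k, (B k).Nonempty := by
    intro B hB k
    obtain ⟨A, hA, hdim, h, rfl⟩ := mem_Md.1 hB
    obtain ⟨i, hi⟩ := dim_used hn hdim k
    exact rf_nonempty _ ⟨i, (mem_dual _ _ _).2 hi⟩
  have hsep : ∀ B ∈ Md M, ∀ D ∈ M, Sep B (dualType D) := by
    intro B hB D hD
    obtain ⟨A, hA, hdim, h, rfl⟩ := mem_Md.1 hB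
    exact (hM.sep A hA D hD).dual.rf h
  refine ⟨hne, ?_, ?_, ?_, ?_⟩
  · intro i
    obtain ⟨V, hV, hVi⟩ := big hM hd i
    refine mem_Md.2 ⟨V, hV, conn_dim hd (fun Z hZ => ?_) (hrow V hV),
      fun i' => if i' = i then 0 else 1, ?_⟩
    · rcases hZ.2 i with h | h
      · right; rw [hVi] at h; exact Finset.univ_subset_iff.1 h
      · left; rw [hVi] at h
        exact Finset.eq_empty_of_forall_notMem
          (fun x hx => Finset.disjoint_left.1 h (Finset.mem_univ x) hx)
    · funext k
      have hi : i ∈ dualType V k := (mem_dual _ _ _).2 (hVi ▸ Finset.mem_univ k)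
      ext i'
      rw [mem_rf, Finset.mem_singleton]
      constructor
      · rintro rfl
        refine ⟨hi, fun x _ => ?_⟩
        rw [if_pos rfl]; split_ifs <;> norm_num
      · rintro ⟨-, h⟩
        have := h i hi
        by_contra hc
        rw [if_neg hc, if_pos rfl] at this
        norm_num at this
  · intro B hB B' hB'
    obtain ⟨A, hA, hdim, h, rfl⟩ := mem_Md.1 hB'
    exact ((hsep B hB A hA).symm.rf h).symm.acyclic
  · intro B hB B' hB' j
    have hs : ∀ B ∈ Md M, ∀ D ∈ M, Sep (dualType B) D := fun B hB D hD => by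
      have := (hsep B hB D hD).dual
      rwa [dual_dual] at this
    have hu : ∀ B ∈ Md M, ∀ k, ∃ i, k ∈ dualType B i := fun B hB k => by
      obtain ⟨i, hi⟩ := hne B hB k
      exact ⟨i, (mem_dual _ _ _).2 hi⟩
    obtain ⟨V, hV, hc, h, S, S', hj, hj', hor, hmem⟩ := elim_core hn hd hM (hs B hB) (hs B' hB')
      (hu B hB) (hu B' hB') j
    simp only [mem_dual] at hmem
    refine ⟨_, mem_Md.2 ⟨V, hV, conn_dim hd hc (hrow V hV), h, rfl⟩, ?_, fun k => ?_⟩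
    · ext i; rw [hmem, Finset.mem_union]; simp [hj, hj']
    · by_cases h1 : k ∈ S <;> by_cases h2 : k ∈ S'
      · right; right; ext i; rw [hmem, Finset.mem_union]; simp [h1, h2]
      · left; ext i; rw [hmem]; simp [h1, h2]
      · right; left; ext i; rw [hmem]; simp [h1, h2]
      · exact absurd (hor k) (by simp [h1, h2])
  · intro B hB P hP'
    obtain ⟨A, hA, hdim, h, rfl⟩ := mem_Md.1 hB
    rw [refine_rf _ hP']
    obtain ⟨g, hg⟩ := rf_comp h (hP P)
    exact mem_Md.2 ⟨A, hA, hdim, g, funext fun k => hg _⟩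

end
end TOMD
theorem stmt_6 {n d : ℕ} (hn : 1 ≤ n) (hd : 1 ≤ d)
    (M : Set (Fin n → Finset (Fin d))) (hM : IsTOM n d M) :
    IsTOM d n {B | ∃ A ∈ M, typeDim A = 0 ∧
      ∃ P : List (Finset (Fin n)), IsOrderedPartition P ∧ B = refineType (dualType A) P} := by
  exact TOMD.main (by omega) (by omega) M hM
end

section
/- Let d ≥ 2, let p ∈ ℝ^d have pairwise distinct coordinates, let i ∈ [d], and let J be a nonempty subset of [d]. Then H_{i,p}^+ approximates T_J if and only if i ∈ J and p_j < p_i for every j ∈ J \ {i}, i.e. if and only if i ∈ J and J ⊆ {i} ∪ {q ∈ [d] : p_q < p_i}. -/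
open EMetric

/-- `m(x) = min_l x_l`, the minimum coordinate of `x`. -/
noncomputable def minCoord {d : ℕ} (x : EuclideanSpace ℝ (Fin d)) : ℝ :=
  sInf (Set.range fun l => x l)

/-- `T_J`: the set of points of type `J` with respect to the tropical (min-plus)
hyperplane with apex `0`. -/
noncomputable def tropType {d : ℕ} (J : Finset (Fin d)) :
    Set (EuclideanSpace ℝ (Fin d)) :=
  {x | {k | x k = minCoord x} = (J : Set (Fin d))}

/-- `H_{i,p}^+`: the open sector of the tropical hyperplane with apex `p`
corresponding to coordinate `i`. -/
def openSector {d : ℕ} (i : Fin d) (p : EuclideanSpace ℝ (Fin d)) :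
    Set (EuclideanSpace ℝ (Fin d)) :=
  {x | ∀ j, j ≠ i → x i - p i < x j - p j}

/-- `A` approximates `K`: there is `ε > 0` such that every point of `K` at
(Euclidean) distance at least `ε` from the relative boundary `cl K \ K` of `K`
belongs to `A` (with the distance to the empty set taken to be `+∞`). -/
def Approximates {d : ℕ} (A K : Set (EuclideanSpace ℝ (Fin d))) : Prop :=
  ∃ ε > (0 : ℝ), ∀ x ∈ K, ENNReal.ofReal ε ≤ infEdist x (closure K \ K) → x ∈ A

theorem mem_tropType_iff' {d : ℕ} (J : Finset (Fin d)) (j0 : Fin d) (hj0 : j0 ∈ J)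
    (x : EuclideanSpace ℝ (Fin d)) :
    x ∈ tropType J ↔ (∀ j ∈ J, x j = x j0) ∧ ∀ k, k ∉ J → x j0 < x k := by
  have hfin : (Set.range fun l => x l).Finite := Set.finite_range _
  have hle : ∀ k, minCoord x ≤ x k := fun k => csInf_le hfin.bddBelow ⟨k, rfl⟩
  unfold tropType
  rw [Set.mem_setOf_eq, Set.ext_iff]
  simp only [Set.mem_setOf_eq, Finset.mem_coe]
  constructor
  · intro h
    have h0 := (h j0).2 hj0
    refine ⟨fun j hj => by rw [(h j).2 hj, h0], fun k hk => ?_⟩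
    rw [h0]
    exact lt_of_le_of_ne (hle k) (fun e => hk ((h k).1 e.symm))
  · rintro ⟨h1, h2⟩
    have hm : minCoord x = x j0 := by
      apply le_antisymm (hle j0)
      apply le_csInf (Set.range_nonempty_iff_nonempty.2 ⟨j0⟩)
      rintro _ ⟨k, rfl⟩
      by_cases hk : k ∈ J
      · exact (h1 k hk).ge
      · exact (h2 k hk).le
    intro k
    rw [hm]
    refine ⟨fun e => ?_, h1 k⟩
    by_contra hk
    exact (h2 k hk).ne' e

theorem coord_le_dist' {d : ℕ} (x y : EuclideanSpace ℝ (Fin d)) (k : Fin d) :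
    |x k - y k| ≤ dist x y := by
  rw [dist_eq_norm]
  have := PiLp.norm_apply_le (x - y) k
  simpa using this

theorem stmt_8 {d : ℕ} (hd : 2 ≤ d) (p : EuclideanSpace ℝ (Fin d))
    (hp : Function.Injective fun l => p l) (i : Fin d)
    (J : Finset (Fin d)) (hJ : J.Nonempty) :
    Approximates (openSector i p) (tropType J) ↔
      i ∈ J ∧ ∀ j ∈ J, j ≠ i → p j < p i := by
  constructor
  · rintro ⟨ε, hε, h⟩
    obtain ⟨j0, hj0⟩ := hJ
    have key : ∀ R : ℝ, 2 * ε ≤ R →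
        (WithLp.toLp 2 (fun k => if k ∈ J then (0:ℝ) else R) : EuclideanSpace ℝ (Fin d))
          ∈ openSector i p := by
      intro R hR
      apply h
      · rw [mem_tropType_iff' J j0 hj0]
        refine ⟨fun j hj => by simp [hj, hj0], fun k hk => ?_⟩
        simp [hk, hj0]
        linarith
      · refine Metric.le_infEDist.2 ?_
        rintro y ⟨hy, hyn⟩
        have hC : (∀ j ∈ J, y j = y j0) := by
          have hcl : IsClosed {y : EuclideanSpace ℝ (Fin d) | ∀ j ∈ J, y j = y j0} := by
            simp only [Set.setOf_forall]
            refine isClosed_iInter fun j => isClosed_iInter fun _ => ?_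
            exact isClosed_eq (by fun_prop) (by fun_prop)
          exact closure_minimal
            (fun z hz => ((mem_tropType_iff' J j0 hj0 z).1 hz).1) hcl hy
        rw [mem_tropType_iff' J j0 hj0] at hyn
        push Not at hyn
        obtain ⟨k, hk, hky⟩ := hyn hC
        rw [edist_dist]
        apply ENNReal.ofReal_le_ofReal
        have h1 := (abs_le.1 (coord_le_dist' (WithLp.toLp 2 (fun k => if k ∈ J then (0:ℝ) else R) : EuclideanSpace ℝ (Fin d)) y k)).2
        have h2 := (abs_le.1 (coord_le_dist' (WithLp.toLp 2 (fun k => if k ∈ J then (0:ℝ) else R) : EuclideanSpace ℝ (Fin d)) y j0)).1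
        simp only [hk, hj0, if_true, if_false] at h1 h2
        linarith
    have hi : i ∈ J := by
      by_contra hi
      have h1 := key (max (2 * ε) (p i - p j0)) (le_max_left _ _) j0
        (fun e => hi (e ▸ hj0))
      simp only [hi, hj0, if_true, if_false] at h1
      have := le_max_right (2 * ε) (p i - p j0)
      linarith
    refine ⟨hi, fun j hj hji => ?_⟩
    have h1 := key (2 * ε) le_rfl j hji
    simp only [hi, hj, if_true] at h1
    linarith
  · rintro ⟨hi, hJi⟩
    refine ⟨1 + 2 * ‖p‖, by positivity, fun x hx hdist j hji => ?_⟩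
    have hx' := (mem_tropType_iff' J i hi x).1 hx
    by_cases hj : j ∈ J
    · have := hx'.1 j hj
      have := hJi j hj hji
      linarith
    have hlt := hx'.2 j hj
    have hy : x + EuclideanSpace.single j (x i - x j) ∈ closure (tropType J) \ tropType J := by
      constructor
      · rw [Metric.mem_closure_iff]
        intro δ hδ
        refine ⟨x + EuclideanSpace.single j (x i - x j) + EuclideanSpace.single j (δ / 2), ?_, ?_⟩
        · rw [mem_tropType_iff' J i hi]
          refine ⟨fun l hl => ?_, fun k hk => ?_⟩
          · have hlj : l ≠ j := fun e => hj (e ▸ hl)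
            simp [hlj, hji.symm, hx'.1 l hl]
          · have := hx'.2 k hk
            by_cases hkj : k = j
            · subst hkj
              simp [hji.symm, hδ]
            · simpa [hkj, hji.symm] using this
        · rw [dist_self_add_right]
          simp [abs_of_pos hδ, hδ]
      · rw [mem_tropType_iff' J i hi]
        rintro ⟨-, h2⟩
        have := h2 j hj
        simp [hji.symm] at this
    have h1 := hdist.trans (Metric.infEDist_le_edist_of_mem hy)
    rw [edist_dist, ENNReal.ofReal_le_ofReal_iff dist_nonneg, dist_self_add_right] at h1
    simp only [EuclideanSpace.norm_single, Real.norm_eq_abs, abs_of_neg (sub_neg.2 hlt)] at h1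
    have a := (abs_le.1 (PiLp.norm_apply_le p i)).1
    have b := (abs_le.1 (PiLp.norm_apply_le p j)).2
    linarith
end
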